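/- arXiv:0901.0907 — 3 statements merged into one kernel-verified Lean document; each statement's English description precedes it below -/
import Mathlib

section
/- (Grinshpan–Kaliuzhnyi-Verbovetskyi–Vinnikov–Woerdeman) Let λ₁,…,λ_N be points of 𝔻^d and let w₁,…,w_N ∈ ℂ. If there exists an analytic function φ : 𝔻^d → ℂ with sup_{𝔻^d}|φ| ≤ 1 and φ(λ_i) = w_i for i = 1,…,N, then for every pair of indices 1 ≤ p < q ≤ d there exist positive semi-definite N×N matrices Γ^p and Γ^q such that for all i,j: 1 − w_i w̄_j = ∏_{r ≠ q} (1 − λ_i^r λ̄_j^r) Γ^q_{ij} + ∏_{r ≠ p} (1 − λ_i^r λ̄_j^r) Γ^p_{ij}. -/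
open Matrix Finset
open scoped ComplexOrder

/-- The open polydisk `𝔻^d` in `ℂ^d`. -/
def Polydisk (d : ℕ) : Set (Fin d → ℂ) := {lam | ∀ r, ‖lam r‖ < 1}

namespace GKVW

/-! ### Part 1: uniform polynomial approximation -/

lemma interp_pow {M : ℕ} (hM : 0 < M) {ω : ℂ} (hω : IsPrimitiveRoot ω M) (z : ℂ) {m : ℕ}
    (hm : m < M) :
    ∑ j ∈ range M, (ω ^ j) ^ m * ((M : ℂ)⁻¹ * ∑ n ∈ range M, (z * (ω⁻¹) ^ j) ^ n) = z ^ m := by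
  have hω0 : ω ≠ 0 := hω.ne_zero hM.ne'
  have hM0 : (M : ℂ) ≠ 0 := by exact_mod_cast hM.ne'
  have key : ∀ n ∈ range M, ∑ j ∈ range M, (ω ^ m * (ω⁻¹) ^ n) ^ j = if n = m then (M : ℂ) else 0 := by
    intro n hn
    have hn' := Finset.mem_range.1 hn
    split_ifs with h
    · subst h
      have : ω ^ n * (ω⁻¹) ^ n = 1 := by
        rw [← mul_pow, mul_inv_cancel₀ hω0, one_pow]
      simp only [this, one_pow]; simp
    · set η := ω ^ m * (ω⁻¹) ^ n with hη
      have h1 : η ^ M = 1 := by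
        rw [hη, mul_pow, ← pow_mul, ← pow_mul, mul_comm m, mul_comm n, pow_mul, pow_mul,
          inv_pow, hω.pow_eq_one]; simp
      have h2 : η ≠ 1 := by
        intro h3
        rw [hη, inv_pow, mul_inv_eq_one₀ (pow_ne_zero _ hω0)] at h3
        exact h (hω.pow_inj hn' hm h3.symm)
      have h3 := geom_sum_mul η M
      rw [h1, sub_self] at h3
      exact (mul_eq_zero.1 h3).resolve_right (sub_ne_zero.2 h2)
  calc ∑ j ∈ range M, (ω ^ j) ^ m * ((M : ℂ)⁻¹ * ∑ n ∈ range M, (z * (ω⁻¹) ^ j) ^ n)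
      = ∑ n ∈ range M, (M : ℂ)⁻¹ * z ^ n * ∑ j ∈ range M, (ω ^ m * (ω⁻¹) ^ n) ^ j := by
        simp_rw [Finset.mul_sum]
        rw [Finset.sum_comm]
        refine Finset.sum_congr rfl fun n _ => Finset.sum_congr rfl fun j _ => ?_
        rw [mul_pow, mul_pow, ← pow_mul, ← pow_mul, ← pow_mul, ← pow_mul, mul_comm j m,
          mul_comm j n]
        ring
    _ = ∑ n ∈ range M, (M : ℂ)⁻¹ * z ^ n * (if n = m then (M : ℂ) else 0) :=
        Finset.sum_congr rfl fun n hn => by rw [key n hn]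
    _ = z ^ m := by
        rw [Finset.sum_eq_single m]
        · simp [hM0, mul_comm]
        · intro b _ hb; simp [hb]
        · intro h; exact absurd (Finset.mem_range.2 hm) h

lemma interp_one {R : ℝ} (hR : 1 < R) {ε : ℝ} (hε : 0 < ε) :
    ∃ (M : ℕ) (ζ : ℕ → ℂ) (l : ℕ → Polynomial ℂ), (∀ j, ‖ζ j‖ = 1) ∧
      ∀ f : ℂ → ℂ, DifferentiableOn ℂ f (Metric.ball 0 R) →
        (∀ z ∈ Metric.ball (0 : ℂ) R, ‖f z‖ ≤ 1) →
        ∀ z : ℂ, ‖z‖ ≤ 1 → ‖f z - ∑ j ∈ range M, f (ζ j) * (l j).eval z‖ ≤ ε := by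
  set ρ : ℝ := (1 + R) / 2 with hρ
  have hρ1 : 1 < ρ := by rw [hρ]; linarith
  have hρR : ρ < R := by rw [hρ]; linarith
  have hρ0 : 0 < ρ := by linarith
  set s : ℝ := ρ⁻¹ with hs
  have hs0 : 0 ≤ s := by positivity
  have hs1 : s < 1 := inv_lt_one_of_one_lt₀ hρ1
  have hlim : Filter.Tendsto (fun M : ℕ => ((M : ℝ) * s ^ M + s ^ M) / (1 - s)) Filter.atTop
      (nhds ((0 + 0) / (1 - s))) :=
    ((tendsto_self_mul_const_pow_of_lt_one hs0 hs1).add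
      (tendsto_pow_atTop_nhds_zero_of_lt_one hs0 hs1)).div_const _
  rw [add_zero, zero_div] at hlim
  obtain ⟨M, hMε, hM⟩ := ((hlim.eventually (gt_mem_nhds hε)).and
    (Filter.eventually_gt_atTop 0)).exists
  set ω : ℂ := Complex.exp (2 * Real.pi * Complex.I / M) with hωdef
  have hω : IsPrimitiveRoot ω M := Complex.isPrimitiveRoot_exp M hM.ne'
  have hωn : ‖ω‖ = 1 := hω.norm'_eq_one hM.ne'
  refine ⟨M, fun j => ω ^ j, fun j => Polynomial.C ((M : ℂ)⁻¹) *
    ∑ n ∈ range M, (Polynomial.X * Polynomial.C ((ω⁻¹) ^ j)) ^ n, fun j => by simp [hωn], ?_⟩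
  intro f hf hf1 z hz
  have hev : ∀ j, (Polynomial.C ((M : ℂ)⁻¹) *
    ∑ n ∈ range M, (Polynomial.X * Polynomial.C ((ω⁻¹) ^ j)) ^ n).eval z =
      (M : ℂ)⁻¹ * ∑ n ∈ range M, (z * (ω⁻¹) ^ j) ^ n := by
    intro j
    simp only [Polynomial.eval_mul, Polynomial.eval_C, Polynomial.eval_finsetSum,
      Polynomial.eval_pow, Polynomial.eval_X]
  simp_rw [hev]
  set l : ℕ → ℂ := fun j => (M : ℂ)⁻¹ * ∑ n ∈ range M, (z * (ω⁻¹) ^ j) ^ n with hl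
  have hlb : ∀ j, ‖l j‖ ≤ 1 := by
    intro j
    rw [hl]
    simp only [norm_mul, norm_inv, Complex.norm_natCast]
    have : ‖∑ n ∈ range M, (z * (ω⁻¹) ^ j) ^ n‖ ≤ M := by
      calc _ ≤ ∑ n ∈ range M, ‖(z * (ω⁻¹) ^ j) ^ n‖ := norm_sum_le _ _
        _ ≤ ∑ n ∈ range M, (1 : ℝ) := by
          refine Finset.sum_le_sum fun n _ => ?_
          simp only [norm_pow, norm_mul, norm_inv, hωn]
          simpa using pow_le_one₀ (norm_nonneg z) hz
        _ = M := by simp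
    have hM' : (0 : ℝ) < M := by exact_mod_cast hM
    rw [inv_mul_le_iff₀ hM']; simpa using this
  -- Taylor coefficients
  set a : ℕ → ℂ := fun n => (n.factorial : ℂ)⁻¹ * iteratedDeriv n f 0 with ha
  have hab : ∀ n, ‖a n‖ ≤ s ^ n := by
    intro n
    have h1 : ‖iteratedDeriv n f 0‖ ≤ n.factorial * 1 / ρ ^ n := by
      apply Complex.norm_iteratedDeriv_le_of_forall_mem_sphere_norm_le n hρ0
      · apply DifferentiableOn.diffContOnCl
        rw [closure_ball _ hρ0.ne']
        exact hf.mono (Metric.closedBall_subset_ball hρR)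
      · intro z hz
        apply hf1
        simp only [mem_sphere_iff_norm, sub_zero] at hz
        simp [hz, hρR]
    rw [ha]
    simp only [norm_mul, norm_inv, Complex.norm_natCast]
    have hn : (0 : ℝ) < n.factorial := by exact_mod_cast n.factorial_pos
    rw [inv_mul_le_iff₀ hn, hs, inv_pow]
    simpa [div_eq_mul_inv] using h1
  have htail : ∀ x : ℂ, ‖x‖ ≤ 1 → ‖∑ n ∈ range M, a n * x ^ n - f x‖ ≤ s ^ M / (1 - s) := by
    intro x hx
    have h1 : HasSum (fun n => a n * x ^ n) (f x) := by
      have := Complex.hasSum_taylorSeries_on_ball hf (z := x) (by simp; linarith)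
      refine this.congr_fun ?_ |> fun h => h
      intro n
      simp [ha]; ring
    have h2 := norm_sub_le_of_geometric_bound_of_hasSum (C := 1) hs1 (f := fun n => a n * x ^ n)
      (fun n => ?_) h1 M
    · simpa using h2
    · rw [norm_mul, norm_pow, one_mul]
      calc ‖a n‖ * ‖x‖ ^ n ≤ s ^ n * 1 := by
            gcongr
            · exact hab n
            · exact pow_le_one₀ (norm_nonneg x) hx
        _ = s ^ n := mul_one _
  have hexact : ∑ j ∈ range M, (∑ n ∈ range M, a n * (ω ^ j) ^ n) * l j
      = ∑ n ∈ range M, a n * z ^ n := by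
    simp_rw [Finset.sum_mul]
    rw [Finset.sum_comm]
    refine Finset.sum_congr rfl fun n hn => ?_
    rw [← interp_pow hM hω z (Finset.mem_range.1 hn), Finset.mul_sum]
    refine Finset.sum_congr rfl fun j _ => ?_
    rw [hl]; ring
  have hsplit : f z - ∑ j ∈ range M, f (ω ^ j) * l j =
      -(∑ n ∈ range M, a n * z ^ n - f z) +
      ∑ j ∈ range M, (∑ n ∈ range M, a n * (ω ^ j) ^ n - f (ω ^ j)) * l j := by
    simp_rw [sub_mul, Finset.sum_sub_distrib, hexact]; ring
  have : ‖f z - ∑ j ∈ range M, f (ω ^ j) * l j‖ ≤ s ^ M / (1 - s) + M * (s ^ M / (1 - s)) := by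
    rw [hsplit]
    refine (norm_add_le _ _).trans (add_le_add ?_ ?_)
    · rw [norm_neg]; exact htail z hz
    · refine (norm_sum_le _ _).trans ?_
      calc _ ≤ ∑ j ∈ range M, s ^ M / (1 - s) := by
            refine Finset.sum_le_sum fun j _ => ?_
            rw [norm_mul]
            calc _ ≤ (s ^ M / (1 - s)) * 1 := by
                  exact mul_le_mul (htail _ (by simp [hωn])) (hlb j) (norm_nonneg _)
                    (div_nonneg (by positivity) (by linarith))
              _ = _ := mul_one _
        _ = _ := by simp
  refine this.trans ?_
  have h5 : s ^ M / (1 - s) + M * (s ^ M / (1 - s)) = ((M : ℝ) * s ^ M + s ^ M) / (1 - s) := by ring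
  rw [h5]; exact hMε.le

/-- uniform approximability by polynomials on the closed polydisk -/
def Approx {d : ℕ} (h : (Fin d → ℂ) → ℂ) : Prop :=
  ∀ ε > 0, ∃ p : MvPolynomial (Fin d) ℂ, ∀ z : Fin d → ℂ, (∀ r, ‖z r‖ ≤ 1) →
    ‖h z - MvPolynomial.eval z p‖ ≤ ε

lemma Approx.add {d : ℕ} {f g : (Fin d → ℂ) → ℂ} (hf : Approx f) (hg : Approx g) :
    Approx (fun z => f z + g z) := by
  intro ε hε
  obtain ⟨p, hp⟩ := hf (ε / 2) (by positivity)
  obtain ⟨q, hq⟩ := hg (ε / 2) (by positivity)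
  refine ⟨p + q, fun z hz => ?_⟩
  rw [map_add, add_sub_add_comm]
  refine (norm_add_le _ _).trans ?_
  linarith [hp z hz, hq z hz]

lemma Approx.const {d : ℕ} (c : ℂ) : Approx (fun _ : Fin d → ℂ => c) := fun ε hε =>
  ⟨MvPolynomial.C c, fun z _ => by simp [hε.le]⟩

lemma Approx.sum {d : ℕ} {ι : Type*} (s : Finset ι) (f : ι → (Fin d → ℂ) → ℂ)
    (hf : ∀ i, Approx (f i)) : Approx (fun z => ∑ i ∈ s, f i z) := by
  classical
  induction s using Finset.induction_on with
  | empty => simpa using Approx.const 0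
  | insert a s ha ih => simp_rw [Finset.sum_insert ha]; exact (hf a).add ih

lemma isCompact_closedPolydisk (d : ℕ) : IsCompact {z : Fin d → ℂ | ∀ r, ‖z r‖ ≤ 1} := by
  have : {z : Fin d → ℂ | ∀ r, ‖z r‖ ≤ 1} = Set.pi Set.univ fun _ => Metric.closedBall 0 1 := by
    ext z; simp
  rw [this]
  exact isCompact_univ_pi fun _ => isCompact_closedBall _ _

lemma Approx.mul_poly {d : ℕ} {f : (Fin d → ℂ) → ℂ} (hf : Approx f) (q : MvPolynomial (Fin d) ℂ) :
    Approx (fun z => f z * MvPolynomial.eval z q) := by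
  obtain ⟨C, hC⟩ := (isCompact_closedPolydisk d).exists_bound_of_continuousOn
    (f := fun z => MvPolynomial.eval z q) (MvPolynomial.continuous_eval q).continuousOn
  intro ε hε
  obtain ⟨p, hp⟩ := hf (ε / (|C| + 1)) (by positivity)
  refine ⟨p * q, fun z hz => ?_⟩
  rw [map_mul, ← sub_mul, norm_mul]
  calc _ ≤ (ε / (|C| + 1)) * (|C| + 1) := by
        gcongr
        · exact hp z hz
        · exact (hC z hz).trans ((le_abs_self C).trans (by linarith))
    _ = ε := by field_simp

lemma Approx.of_limit {d : ℕ} {f : (Fin d → ℂ) → ℂ}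
    (h : ∀ ε > 0, ∃ g, Approx g ∧ ∀ z : Fin d → ℂ, (∀ r, ‖z r‖ ≤ 1) → ‖f z - g z‖ ≤ ε) :
    Approx f := by
  intro ε hε
  obtain ⟨g, hg, hfg⟩ := h (ε / 2) (by positivity)
  obtain ⟨p, hp⟩ := hg (ε / 2) (by positivity)
  refine ⟨p, fun z hz => ?_⟩
  calc _ = ‖(f z - g z) + (g z - MvPolynomial.eval z p)‖ := by ring_nf
    _ ≤ _ := norm_add_le _ _
    _ ≤ ε := by linarith [hp z hz, hfg z hz]

lemma approx_of_dep {d : ℕ} {R : ℝ} (hR : 1 < R) (S : Finset (Fin d)) :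
    ∀ h : (Fin d → ℂ) → ℂ, DifferentiableOn ℂ h {z | ∀ r, ‖z r‖ < R} →
      (∀ z, (∀ r, ‖z r‖ < R) → ‖h z‖ ≤ 1) →
      (∀ z z' : Fin d → ℂ, (∀ r ∈ S, z r = z' r) → h z = h z') → Approx h := by
  classical
  induction S using Finset.induction_on with
  | empty =>
    intro h _ _ hdep
    have : h = fun _ => h 0 := funext fun z => hdep z 0 (by simp)
    rw [this]; exact Approx.const _
  | insert s S hs ih =>
    intro h hd hb hdep
    apply Approx.of_limit
    intro ε hε
    obtain ⟨M, ζ, l, hζ, hinterp⟩ := interp_one hR hε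
    refine ⟨fun z => ∑ j ∈ range M, h (Function.update z s (ζ j)) *
      MvPolynomial.eval z (Polynomial.aeval (MvPolynomial.X s) (l j)), ?_, ?_⟩
    · apply Approx.sum
      intro j
      apply Approx.mul_poly
      apply ih
      · refine hd.comp (g := h) (f := fun z => Function.update z s (ζ j)) ?_ ?_
        · apply Differentiable.differentiableOn
          rw [differentiable_pi]
          intro i
          by_cases hi : i = s
          · subst hi; simp
          · simp only [Function.update_of_ne hi]; fun_prop
        · intro z hz r
          by_cases hr : r = s
          · subst hr; simp [hζ, hR]
          · simpa [Function.update_of_ne hr] using hz r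
      · intro z hz
        apply hb
        intro r
        by_cases hr : r = s
        · subst hr; simp [hζ, hR]
        · simpa [Function.update_of_ne hr] using hz r
      · intro z z' hzz
        apply hdep
        intro r hr
        by_cases hrs : r = s
        · subst hrs; simp
        · simp only [Function.update_of_ne hrs]
          exact hzz r ((Finset.mem_insert.1 hr).resolve_left hrs)
    · intro z hz
      have hmaps : ∀ x ∈ Metric.ball (0 : ℂ) R, ∀ r, ‖Function.update z s x r‖ < R := by
        intro x hx r
        by_cases hr : r = s
        · subst hr; simpa using hx
        · simp only [Function.update_of_ne hr]; linarith [hz r]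
      have := hinterp (fun x => h (Function.update z s x)) ?_ ?_ (z s) (hz s)
      · simp only [Function.update_eq_self] at this
        convert this using 6 with j
        rw [Polynomial.aeval_def, Polynomial.hom_eval₂, Polynomial.eval, MvPolynomial.eval_X]
        congr 1
        ext x
        simp
      · refine hd.comp (g := h) (f := fun x => Function.update z s x) ?_ hmaps
        apply Differentiable.differentiableOn
        rw [differentiable_pi]
        intro i
        by_cases hi : i = s
        · subst hi; simp
        · simp only [Function.update_of_ne hi]; fun_prop
      · intro x hx
        exact hb _ (hmaps x hx)

/-! ### Part 2: the abstract Hilbert space argument -/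

section Abstract

variable {L : Type*} [NormedAddCommGroup L] [InnerProductSpace ℂ L]

local notation "⟪" x "," y "⟫" => inner ℂ x y

lemma posSemidef_of_forms {n N : ℕ} (ε : Fin n → ℝ) (A : Fin n → L →L[ℂ] L) (k : Fin N → L)
    (h : ∀ c : Fin N → ℂ, 0 ≤ ∑ m, ε m * ‖A m (∑ i, c i • k i)‖ ^ 2) :
    (Matrix.of fun i j => ∑ m, (ε m : ℂ) * ⟪A m (k i), A m (k j)⟫).PosSemidef := by
  refine Matrix.PosSemidef.of_dotProduct_mulVec_nonneg ?_ ?_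
  · ext i j
    simp [Matrix.conjTranspose_apply]
  · intro c
    have h1 : star c ⬝ᵥ ((Matrix.of fun i j => ∑ m, (ε m : ℂ) * ⟪A m (k i), A m (k j)⟫) *ᵥ c) =
        ((∑ m, ε m * ‖A m (∑ i, c i • k i)‖ ^ 2 : ℝ) : ℂ) := by
      have h2 : ∀ m, ((‖A m (∑ i, c i • k i)‖ ^ 2 : ℝ) : ℂ) =
          ∑ i, ∑ j, star (c i) * (c j * ⟪A m (k i), A m (k j)⟫) := by
        intro m
        rw [Complex.ofReal_pow]
        have := inner_self_eq_norm_sq_to_K (𝕜 := ℂ) (A m (∑ i, c i • k i))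
        rw [show ((‖A m (∑ i, c i • k i)‖ : ℝ) : ℂ) ^ 2 = _ from this.symm]
        rw [map_sum, sum_inner]
        refine Finset.sum_congr rfl fun i _ => ?_
        rw [inner_sum]
        refine Finset.sum_congr rfl fun j _ => ?_
        simp only [map_smul, inner_smul_left, inner_smul_right, RCLike.star_def]
        ring
      rw [Complex.ofReal_sum]
      simp_rw [Complex.ofReal_mul, h2]
      simp only [dotProduct, Matrix.mulVec, Matrix.of_apply, Pi.star_apply, Finset.mul_sum,
        Finset.sum_mul]
      rw [Finset.sum_comm' (t' := Finset.univ) (s' := fun _ => Finset.univ) (by simp)]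
      rw [Finset.sum_comm]
      conv_rhs => rw [Finset.sum_comm]
      refine Finset.sum_congr rfl fun i _ => ?_
      rw [Finset.sum_comm]
      conv_rhs => rw [Finset.sum_comm]
      rw [Finset.sum_comm]
      refine Finset.sum_congr rfl fun j _ => ?_
      refine Finset.sum_congr rfl fun m _ => ?_
      ring
    rw [h1]
    exact_mod_cast h c

/-- the data of two orthogonal projections and an operator with its adjoint -/
structure Setup (P Q u ud : L →L[ℂ] L) : Prop where
  PP : ∀ x, P (P x) = P x
  QQ : ∀ x, Q (Q x) = Q x
  PQ : ∀ x, P (Q x) = 0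
  QP : ∀ x, Q (P x) = 0
  Ps : ∀ x y, ⟪P x, y⟫ = ⟪x, P y⟫
  Qs : ∀ x y, ⟪Q x, y⟫ = ⟪x, Q y⟫
  us : ∀ x y, ⟪ud x, y⟫ = ⟪x, u y⟫
  uE : ∀ x, u (Q x) = P (u (Q x)) + Q (u (Q x))
  uP : ∀ x, Q (u (P x)) = 0
  un : ∀ x, ‖u x‖ ≤ ‖x‖
  udn : ∀ x, ‖ud x‖ ≤ ‖x‖
  Qn : ∀ x, ‖Q x‖ ≤ ‖x‖

variable {P Q u ud : L →L[ℂ] L}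

lemma orth_norm (S : Setup P Q u ud) {x y : L} (hx : P x = x) (hy : Q y = y) :
    ‖x + y‖ ^ 2 = ‖x‖ ^ 2 + ‖y‖ ^ 2 := by
  have h : ⟪x, y⟫ = 0 := by rw [← hx, ← hy, S.Ps, S.PQ, inner_zero_right]
  rw [@norm_add_sq ℂ, h]; simp

/-- positivity of the second term -/
lemma second_pos (S : Setup P Q u ud) {B v vd : L →L[ℂ] L}
    (hB : ∀ k, B k = Q (ud k) + Q (ud (Q (Q (u (Q (B k)))))))
    (vs : ∀ x y, ⟪vd x, y⟫ = ⟪x, v y⟫) (vn : ∀ x, ‖v x‖ = ‖x‖)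
    (vu : ∀ x, v (u x) = u (v x))
    (vQ : ∀ x, Q (v (Q x)) = v (Q x)) (vP : ∀ x, Q (v (P x)) = 0)
    {k : L} (hk : P k = k) :
    ‖B (P (vd k))‖ ^ 2 - ‖Q (u (Q (B (P (vd k)))))‖ ^ 2 ≤ ‖B k‖ ^ 2 - ‖Q (u (Q (B k)))‖ ^ 2 := by
  have hQB : ∀ x, Q (B x) = B x := by
    intro x; rw [hB x, map_add, S.QQ, S.QQ]
  -- inner products with `h`
  have hin : ∀ x y, ⟪Q (ud x), y⟫ = ⟪B x, y⟫ - ⟪Q (u (Q (B x))), Q (u (Q y))⟫ := by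
    intro x y
    have h1 : Q (ud x) = B x - Q (ud (Q (Q (u (Q (B x)))))) := by
      rw [eq_sub_iff_add_eq]; exact (hB x).symm
    rw [h1, inner_sub_left]
    congr 1
    rw [S.Qs, S.us, S.Qs]
  set k' := P (vd k) with hk'
  set g := B k with hg
  set g' := B k' with hg'
  have hQg' : Q g' = g' := hQB k'
  have hQvg' : Q (v g') = v g' := by rw [← hQg', vQ]
  have hcross : ⟪Q (ud k), v g'⟫ = ⟪Q (ud k'), g'⟫ := by
    have e1 : v (u g') = v (P (u g')) + v (Q (u g')) := by
      rw [← map_add, ← hQg', ← S.uE]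
    rw [S.Qs, S.us, hQvg', ← vu, e1, inner_add_right]
    have e2 : ⟪k, v (Q (u g'))⟫ = 0 := by
      rw [← vQ, ← hk, S.Ps, S.PQ, inner_zero_right]
    rw [e2, add_zero, ← vs, ← S.Ps, ← hk', ← S.us, S.Qs (ud k') g', hQg']
  have hT : Q (u (Q (v g'))) = v (Q (u (Q g'))) := by
    rw [hQvg', ← vu, ← hQg', S.uE, map_add, map_add, vP, zero_add, vQ, hQg']
    simp only [hQg']
  have hcontr : ∀ x, ‖Q (u (Q x))‖ ≤ ‖x‖ := fun x =>
    (S.Qn _).trans ((S.un _).trans (S.Qn _))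
  have hpos : 0 ≤ ‖g - v g'‖ ^ 2 - ‖Q (u (Q (g - v g')))‖ ^ 2 := by
    have := hcontr (g - v g')
    have h0 := norm_nonneg (Q (u (Q (g - v g'))))
    nlinarith
  rw [map_sub, map_sub, map_sub, hT, @norm_sub_sq ℂ, @norm_sub_sq ℂ, vn, vn] at hpos
  have e3 : (⟪g, v g'⟫ : ℂ) - ⟪Q (u (Q g)), v (Q (u (Q g')))⟫ =
      ((‖g'‖ : ℂ) ^ 2 - (‖Q (u (Q g'))‖ : ℂ) ^ 2) := by
    rw [← hT, ← hin, hcross, hin]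
    have a1 := inner_self_eq_norm_sq_to_K (𝕜 := ℂ) g'
    have a2 := inner_self_eq_norm_sq_to_K (𝕜 := ℂ) (Q (u (Q g')))
    rw [a1, a2]; rfl
  have e4 := congrArg Complex.re e3
  norm_cast at e4
  have e5 : RCLike.re (⟪g, v g'⟫ : ℂ) - RCLike.re (⟪Q (u (Q g)), v (Q (u (Q g')))⟫ : ℂ) =
    ‖g'‖ ^ 2 - ‖Q (u (Q g'))‖ ^ 2 := e4
  linarith

/-- positivity of the first term -/
lemma first_pos (S : Setup P Q u ud) {B zd : L →L[ℂ] L}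
    (hB : ∀ k, B k = Q (ud k) + Q (ud (Q (Q (u (Q (B k)))))))
    (zn : ∀ x, ‖zd x‖ = ‖x‖)
    (zu : ∀ x, zd (ud x) = ud (zd x))
    (zE : ∀ x, zd (P x + Q x) = P (zd x) + Q (zd x))
    (zQ : ∀ x, P (zd (Q x)) = 0)
    {k : L} (hk : P k = k) :
    ‖P (zd k)‖ ^ 2 - ‖P (ud (P (zd k)))‖ ^ 2
        - (‖B (P (zd k))‖ ^ 2 - ‖Q (u (Q (B (P (zd k)))))‖ ^ 2) ≤
      ‖k‖ ^ 2 - ‖P (ud k)‖ ^ 2 - (‖B k‖ ^ 2 - ‖Q (u (Q (B k)))‖ ^ 2) := by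
  have hQB : ∀ x, Q (B x) = B x := by
    intro x; rw [hB x, map_add, S.QQ, S.QQ]
  have hPuQ : ∀ y, P (ud (Q y)) = 0 := by
    intro y
    rw [← inner_self_eq_zero (𝕜 := ℂ), S.Ps, S.us, S.Qs, S.uP, inner_zero_right]
  have hcontr : ∀ x, ‖Q (ud (Q x))‖ ≤ ‖x‖ := fun x =>
    (S.Qn _).trans ((S.udn _).trans (S.Qn _))
  -- the minimum
  have hmin : ∀ k e, P k = k → Q e = e →
      ‖k + (Q (u (Q (B k))) + e)‖ ^ 2 - ‖P (ud (k + (Q (u (Q (B k))) + e))) +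
        Q (ud (k + (Q (u (Q (B k))) + e)))‖ ^ 2 =
      ‖k‖ ^ 2 - ‖P (ud k)‖ ^ 2 - (‖B k‖ ^ 2 - ‖Q (u (Q (B k)))‖ ^ 2) +
        (‖e‖ ^ 2 - ‖Q (ud (Q e))‖ ^ 2) := by
    intro k e hk he
    have h1 : P (ud (k + (Q (u (Q (B k))) + e))) = P (ud k) := by
      rw [← he, map_add, map_add, map_add, map_add, hPuQ, hPuQ]; simp
    have h2 : Q (ud (k + (Q (u (Q (B k))) + e))) = B k + Q (ud (Q e)) := by
      rw [he, map_add, map_add, map_add, map_add]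
      conv_rhs => rw [hB k]
      rw [S.QQ]; abel
    rw [h1, h2, orth_norm S hk (by rw [map_add, S.QQ, he]),
      orth_norm S (S.PP _) (by rw [map_add, S.QQ, hQB]), @norm_add_sq ℂ _ _ _ _ (Q (u (Q (B k)))),
      @norm_add_sq ℂ _ _ _ _ (B k)]
    have h3 : ⟪B k, Q (ud (Q e))⟫ = ⟪Q (u (Q (B k))), e⟫ := by
      rw [← inner_conj_symm, S.Qs, S.us, S.Qs, inner_conj_symm]
    rw [h3]; ring
  set x := k + (Q (u (Q (B k))) + 0) with hx
  have hxE : P x + Q x = x := by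
    rw [hx]; simp only [map_add, S.PQ, S.QQ, hk, add_zero]
    rw [← hk, S.QP]; simp
  have hzx : zd x = P (zd k) + (Q (u (Q (B (P (zd k))))) +
      (Q (zd x) - Q (u (Q (B (P (zd k))))))) := by
    rw [add_sub_cancel]
    have : P (zd x) = P (zd k) := by rw [hx, map_add, map_add, add_zero, zQ, add_zero]
    rw [← this, ← zE, hxE]
  have m1 := hmin k 0 hk (map_zero _)
  have m2 := hmin (P (zd k)) (Q (zd x) - Q (u (Q (B (P (zd k)))))) (S.PP _)
    (by rw [map_sub, S.QQ, S.QQ])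
  rw [← hzx] at m2
  rw [← hx] at m1
  have hN : ‖P (ud (zd x)) + Q (ud (zd x))‖ = ‖P (ud x) + Q (ud x)‖ := by
    rw [← zu, ← zE, zn]
  rw [zn, hN, m1] at m2
  have h5 := hcontr (Q (zd x) - Q (u (Q (B (P (zd k))))))
  have h6 : ‖Q (ud (Q (Q (zd x) - Q (u (Q (B (P (zd k))))))))‖ ^ 2 ≤
    ‖Q (zd x) - Q (u (Q (B (P (zd k)))))‖ ^ 2 := by gcongr
  simp only [map_zero, norm_zero] at m2
  linarith

lemma exists_B [CompleteSpace L] (S : Setup P Q u ud) {c : ℝ} (hc0 : 0 ≤ c) (hc : c < 1)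
    (hu : ∀ x, ‖u x‖ ≤ c * ‖x‖) :
    ∃ B : L →L[ℂ] L, ∀ k, B k = Q (ud k) + Q (ud (Q (Q (u (Q (B k)))))) := by
  set W : L →L[ℂ] L := Q * ud * Q * (Q * u * Q) with hW
  have hWn : ‖W‖ ≤ c := by
    apply ContinuousLinearMap.opNorm_le_bound _ hc0
    intro x
    calc ‖Q (ud (Q (Q (u (Q x)))))‖ ≤ ‖u (Q x)‖ :=
          (S.Qn _).trans ((S.udn _).trans ((S.Qn _).trans (S.Qn _)))
      _ ≤ c * ‖Q x‖ := hu _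
      _ ≤ c * ‖x‖ := by gcongr; exact S.Qn x
  obtain ⟨U, hU⟩ := isUnit_one_sub_of_norm_lt_one (hWn.trans_lt hc)
  refine ⟨(↑U⁻¹ : L →L[ℂ] L) * (Q * ud), fun k => ?_⟩
  have h1 : (1 - W) (((↑U⁻¹ : L →L[ℂ] L) * (Q * ud)) k) = Q (ud k) := by
    rw [← hU, ← mul_apply_eq_comp, ← mul_assoc, Units.mul_inv, one_mul]; rfl
  rw [_root_.sub_apply, one_apply_eq_self, sub_eq_iff_eq_add] at h1
  exact h1

lemma abstract_pick [CompleteSpace L] (S : Setup P Q u ud) {c : ℝ} (hc0 : 0 ≤ c) (hc : c < 1)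
    (hu : ∀ x, ‖u x‖ ≤ c * ‖x‖) {v vd zd : L →L[ℂ] L}
    (vs : ∀ x y, ⟪vd x, y⟫ = ⟪x, v y⟫) (vn : ∀ x, ‖v x‖ = ‖x‖)
    (vu : ∀ x, v (u x) = u (v x))
    (vQ : ∀ x, Q (v (Q x)) = v (Q x)) (vP : ∀ x, Q (v (P x)) = 0)
    (zn : ∀ x, ‖zd x‖ = ‖x‖)
    (zu : ∀ x, zd (ud x) = ud (zd x))
    (zE : ∀ x, zd (P x + Q x) = P (zd x) + Q (zd x))
    (zQ : ∀ x, P (zd (Q x)) = 0)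
    {N : ℕ} (k : Fin N → L) (hk : ∀ i, P (k i) = k i) (w α β : Fin N → ℂ)
    (hw : ∀ i, P (ud (k i)) = starRingEnd ℂ (w i) • k i)
    (hα : ∀ i, P (vd (k i)) = starRingEnd ℂ (α i) • k i)
    (hβ : ∀ i, P (zd (k i)) = starRingEnd ℂ (β i) • k i) :
    ∃ G1 G2 : Fin N → Fin N → ℂ,
      (Matrix.of fun i j => (1 - α i * starRingEnd ℂ (α j)) * G2 i j).PosSemidef ∧
      (Matrix.of fun i j => (1 - β i * starRingEnd ℂ (β j)) * G1 i j).PosSemidef ∧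
      ∀ i j, G1 i j + G2 i j = (1 - w i * starRingEnd ℂ (w j)) * ⟪k i, k j⟫ := by
  obtain ⟨B, hB⟩ := exists_B S hc0 hc hu
  have hPsum : ∀ a : Fin N → ℂ, P (∑ i, a i • k i) = ∑ i, a i • k i := by
    intro a; simp [hk]
  set T : L →L[ℂ] L := Q * u * Q with hT
  refine ⟨fun i j => ⟪k i, k j⟫ - ⟪P (ud (k i)), P (ud (k j))⟫
      - (⟪B (k i), B (k j)⟫ - ⟪T (B (k i)), T (B (k j))⟫),
    fun i j => ⟪B (k i), B (k j)⟫ - ⟪T (B (k i)), T (B (k j))⟫, ?_, ?_, ?_⟩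
  · have := posSemidef_of_forms ![1, -1, -1, 1] ![B, T * B, B * (P * vd), T * B * (P * vd)] k ?_
    · convert this using 4 with i j
      simp [Fin.sum_univ_succ, hα, inner_smul_left, inner_smul_right]
      ring
    · intro a
      have h := second_pos S hB vs vn vu vQ vP (hPsum a)
      simp only [Fin.sum_univ_four]
      simp only [Matrix.cons_val, mul_apply_eq_comp, hT, one_mul, neg_mul, mul_one]
      linarith
  · have := posSemidef_of_forms ![1, -1, -1, 1, -1, 1, 1, -1]
      ![1, P * ud, B, T * B, P * zd, P * ud * (P * zd), B * (P * zd), T * B * (P * zd)] k ?_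
    · convert this using 4 with i j
      simp [Fin.sum_univ_succ, hβ, inner_smul_left, inner_smul_right]
      ring
    · intro a
      have h := first_pos S hB zn zu zE zQ (hPsum a)
      simp only [Fin.sum_univ_eight]
      simp only [Matrix.cons_val, mul_apply_eq_comp, hT, one_mul, neg_mul, mul_one,
        one_apply_eq_self]
      linarith
  · intro i j
    simp only [hw, inner_smul_left, inner_smul_right, Complex.conj_conj]
    ring

end Abstract

/-! ### Part 3: the concrete model `L²(𝕋^d)` -/

section Model

open MeasureTheory UnitAddTorus

/-- normalised measure on the unit circle, as in Mathlib's file on multiple Fourier series -/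
noncomputable local instance circleMeasureSpace : MeasureSpace UnitAddCircle := ⟨AddCircle.haarAddCircle⟩

local instance circleHaar : Measure.IsAddHaarMeasure (volume : Measure UnitAddCircle) :=
  inferInstanceAs (Measure.IsAddHaarMeasure AddCircle.haarAddCircle)

local instance circleProb : IsProbabilityMeasure (volume : Measure UnitAddCircle) :=
  inferInstanceAs (IsProbabilityMeasure AddCircle.haarAddCircle)

variable {d : ℕ}

/-- multiplication operators on `L²(𝕋^d)` -/
noncomputable def mulOp (f : C(UnitAddTorus (Fin d), ℂ)) :
    Lp ℂ 2 (volume : Measure (UnitAddTorus (Fin d))) →L[ℂ]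
      Lp ℂ 2 (volume : Measure (UnitAddTorus (Fin d))) :=
  (ContinuousLinearMap.mul ℂ ℂ).holderL volume ⊤ 2 2 (ContinuousMap.toLp ⊤ volume ℂ f)

lemma mulOp_coe (f : C(UnitAddTorus (Fin d), ℂ))
    (x : Lp ℂ 2 (volume : Measure (UnitAddTorus (Fin d)))) :
    mulOp f x =ᵐ[volume] fun t => f t * x t := by
  have h1 := (ContinuousLinearMap.mul ℂ ℂ).coeFn_holder (r := 2)
    (ContinuousMap.toLp (E := ℂ) ⊤ volume ℂ f) x
  have h2 := ContinuousMap.coeFn_toLp (p := ⊤) (𝕜 := ℂ) (volume : Measure (UnitAddTorus (Fin d))) f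
  filter_upwards [h1, h2] with t h1 h2
  rw [← h2]
  exact h1

lemma exists_model (d : ℕ) : ∃ (b : HilbertBasis (Fin d → ℤ) ℂ
      (Lp ℂ 2 (volume : Measure (UnitAddTorus (Fin d)))))
    (M : C(UnitAddTorus (Fin d), ℂ) →ₐ[ℂ] (Lp ℂ 2 (volume : Measure (UnitAddTorus (Fin d))) →L[ℂ]
      Lp ℂ 2 (volume : Measure (UnitAddTorus (Fin d))))),
    (∀ f x y, inner ℂ (M (star f) x) y = inner ℂ x (M f y)) ∧
    (∀ f x, ‖M f x‖ ≤ ‖f‖ * ‖x‖) ∧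
    (∀ n m, M (mFourier n) (b m) = b (n + m)) := by
  have hM1 : mulOp (1 : C(UnitAddTorus (Fin d), ℂ)) = 1 := by
    ext1 x
    apply Lp.ext
    filter_upwards [mulOp_coe 1 x] with t ht
    rw [ht]; simp
  have hMm : ∀ f g : C(UnitAddTorus (Fin d), ℂ), mulOp (f * g) = mulOp f * mulOp g := by
    intro f g
    ext1 x
    apply Lp.ext
    filter_upwards [mulOp_coe (f * g) x, mulOp_coe f (mulOp g x), mulOp_coe g x] with t h1 h2 h3
    rw [h1, mul_apply_eq_comp, h2, h3]; simp [mul_assoc]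
  have hadd : ∀ f g : C(UnitAddTorus (Fin d), ℂ), mulOp (f + g) = mulOp f + mulOp g := by
    intro f g; simp only [mulOp, map_add]
  have hsmul : ∀ (c : ℂ) (f : C(UnitAddTorus (Fin d), ℂ)), mulOp (c • f) = c • mulOp f := by
    intro c f; simp only [mulOp, map_smul]
  refine ⟨mFourierBasis, AlgHom.ofLinearMap ⟨⟨mulOp, hadd⟩, hsmul⟩ hM1 hMm, ?_, ?_, ?_⟩
  · intro f x y
    change inner ℂ (mulOp (star f) x) y = inner ℂ x (mulOp f y)
    rw [L2.inner_def, L2.inner_def]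
    apply integral_congr_ae
    filter_upwards [mulOp_coe (star f) x, mulOp_coe f y] with t h1 h2
    rw [h1, h2]
    simp [RCLike.inner_apply]
    ring
  · intro f x
    change ‖mulOp f x‖ ≤ _
    apply Lp.norm_le_mul_norm_of_ae_le_mul
    filter_upwards [mulOp_coe f x] with t h1
    rw [h1, norm_mul]
    gcongr
    exact f.norm_coe_le_norm t
  · intro n m
    change mulOp (mFourier n) _ = _
    rw [coe_mFourierBasis]
    apply Lp.ext
    filter_upwards [mulOp_coe (mFourier n) (mFourierLp 2 m), coeFn_mFourierLp 2 m,
      coeFn_mFourierLp 2 (n + m)] with t h1 h2 h3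
    rw [h1, h2, h3, mFourier_add]

end Model

/-! ### Part 4: the polynomial case -/

section Poly

open UnitAddTorus

variable {L : Type*} [NormedAddCommGroup L] [InnerProductSpace ℂ L] [CompleteSpace L]
variable {d : ℕ}

lemma basis_ext {ι : Type*} (b : HilbertBasis ι ℂ L) {x y : L}
    (h : ∀ k, inner ℂ (b k) x = inner ℂ (b k) y) : x = y := by
  apply b.repr.injective
  ext k
  rw [b.repr_apply_apply, b.repr_apply_apply, h]

lemma exists_proj {ι : Type*} (b : HilbertBasis ι ℂ L) (S : Set ι) :
    ∃ P : L →L[ℂ] L, (∀ k x, k ∈ S → inner ℂ (b k) (P x) = inner ℂ (b k) x) ∧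
      (∀ k x, k ∉ S → inner ℂ (b k) (P x) = 0) ∧
      (∀ x y, inner ℂ (P x) y = inner ℂ x (P y)) ∧ (∀ x, ‖P x‖ ≤ ‖x‖) := by
  classical
  let K : Submodule ℂ L := (Submodule.span ℂ {y | ∃ k, k ∉ S ∧ y = b k})ᗮ
  refine ⟨K.starProjection, ?_, ?_, ?_, ?_⟩
  · intro k x hk
    have hbk : b k ∈ K := by
      rw [Submodule.mem_orthogonal]
      intro u hu
      induction hu using Submodule.span_induction with
      | mem y hy =>
        obtain ⟨m, hm, rfl⟩ := hy
        have : m ≠ k := fun h => hm (h ▸ hk)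
        exact b.orthonormal.inner_eq_zero this
      | zero => simp
      | add y z _ _ hy hz => rw [inner_add_left, hy, hz, add_zero]
      | smul c y _ hy => rw [inner_smul_left, hy, mul_zero]
    rw [← Submodule.inner_starProjection_left_eq_right,
      Submodule.starProjection_eq_self_iff.mpr hbk]
  · intro k x hk
    have h1 : K.starProjection x ∈ K := Submodule.starProjection_apply_mem K x
    exact (Submodule.mem_orthogonal _ _).mp h1 _ (Submodule.subset_span ⟨k, hk, rfl⟩)
  · intro x y
    exact Submodule.inner_starProjection_left_eq_right K x y
  · intro x
    exact Submodule.norm_starProjection_apply_le K x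

/-- the coordinate functions on the torus -/
noncomputable abbrev zc (r : Fin d) : C(UnitAddTorus (Fin d), ℂ) := mFourier (Pi.single r 1)

variable (b : HilbertBasis (Fin d → ℤ) ℂ L)
  (M : C(UnitAddTorus (Fin d), ℂ) →ₐ[ℂ] (L →L[ℂ] L))
  (hMs : ∀ f x y, inner ℂ (M (star f) x) y = inner ℂ x (M f y))
  (hMn : ∀ f x, ‖M f x‖ ≤ ‖f‖ * ‖x‖)
  (hMb : ∀ n m, M (mFourier n) (b m) = b (n + m))

lemma star_mFourier (n : Fin d → ℤ) :
    star (mFourier n : C(UnitAddTorus (Fin d), ℂ)) = mFourier (-n) := by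
  ext t
  rw [mFourier_neg]
  rfl

include hMs hMb in
lemma coef_shift (n k : Fin d → ℤ) (x : L) :
    inner ℂ (b k) (M (mFourier n) x) = inner ℂ (b (k - n)) x := by
  rw [← hMs, star_mFourier, hMb, neg_add_eq_sub]

lemma mul_app (f g : C(UnitAddTorus (Fin d), ℂ)) (x : L) : M (f * g) x = M f (M g x) := by
  rw [map_mul]; rfl

lemma app_comm (f g : C(UnitAddTorus (Fin d), ℂ)) (x : L) : M f (M g x) = M g (M f x) := by
  rw [← mul_app, ← mul_app, mul_comm]

include hMs in
lemma norm_shift (n : Fin d → ℤ) (x : L) : ‖M (mFourier n) x‖ = ‖x‖ := by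
  have h1 : inner ℂ (M (mFourier n) x) (M (mFourier n) x) = inner ℂ x x := by
    have e : (mFourier (-n) : C(UnitAddTorus (Fin d), ℂ)) * mFourier n = 1 := by
      ext t
      rw [ContinuousMap.mul_apply, ← mFourier_add, neg_add_cancel, mFourier_zero]
    rw [← hMs, star_mFourier, ← mul_app, e, map_one]
    rfl
  rw [inner_self_eq_norm_sq_to_K, inner_self_eq_norm_sq_to_K] at h1
  have h2 : ‖M (mFourier n) x‖ ^ 2 = ‖x‖ ^ 2 := by exact_mod_cast h1
  exact (pow_left_inj₀ (norm_nonneg _) (norm_nonneg _) two_ne_zero).mp h2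

/-- `x` has Fourier support in `T` -/
def Supp (T : Set (Fin d → ℤ)) (x : L) : Prop := ∀ k, k ∉ T → inner ℂ (b k) x = 0

include hMs hMb in
lemma supp_poly {T : Set (Fin d → ℤ)} (hT : ∀ k r, k ∈ T → k + Pi.single r 1 ∈ T)
    (f : MvPolynomial (Fin d) ℂ) : ∀ x : L, Supp b T x → Supp b T (M (MvPolynomial.aeval zc f) x) := by
  induction f using MvPolynomial.induction_on with
  | C a =>
    intro x hx k hk
    rw [MvPolynomial.aeval_C, AlgHom.commutes, Algebra.algebraMap_eq_smul_one]
    simp [inner_smul_right, hx k hk]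
  | add f g hf hg =>
    intro x hx k hk
    simp [inner_add_right, hf x hx k hk, hg x hx k hk]
  | mul_X f r hf =>
    intro x hx
    rw [map_mul, MvPolynomial.aeval_X, mul_app]
    apply hf
    intro k hk
    rw [coef_shift b M hMs hMb]
    apply hx
    intro h
    apply hk
    have := hT _ r h
    simpa using this

include hMs hMb in
lemma supp_inv {T : Set (Fin d → ℤ)} {r : Fin d} (hT : ∀ k, k ∈ T → k + Pi.single r 1 ∈ T)
    {a : ℂ} (ha : ‖a‖ < 1) {x y : L} (hx : Supp b T x) (hy : y = x + a • M (zc r) y) :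
    Supp b T y := by
  intro k hk
  have h1 : ∀ n : ℕ, k - (n : ℤ) • Pi.single r 1 ∉ T ∧
      inner ℂ (b k) y = a ^ n * inner ℂ (b (k - (n : ℤ) • Pi.single r 1)) y := by
    intro n
    induction n with
    | zero => simpa using hk
    | succ n ih =>
      have e : k - (n : ℤ) • Pi.single r (1:ℤ) =
        k - ((n + 1 : ℕ) : ℤ) • Pi.single r 1 + Pi.single r 1 := by
        push_cast; rw [add_smul, one_smul]; abel
      refine ⟨fun h => ih.1 (e ▸ hT _ h), ?_⟩
      rw [ih.2]
      conv_lhs => rw [hy]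
      rw [inner_add_right, hx _ ih.1, inner_smul_right, coef_shift b M hMs hMb, zero_add]
      rw [show k - (n : ℤ) • Pi.single r (1:ℤ) - Pi.single r 1 =
        k - ((n + 1 : ℕ) : ℤ) • Pi.single r 1 from by
          push_cast; rw [add_smul, one_smul]; abel]
      ring
  have h2 : ∀ n : ℕ, ‖inner ℂ (b k) y‖ ≤ ‖a‖ ^ n * ‖y‖ := by
    intro n
    rw [(h1 n).2, norm_mul, norm_pow]
    gcongr
    refine (norm_inner_le_norm _ _).trans ?_
    rw [b.orthonormal.1, one_mul]
  have h3 : Filter.Tendsto (fun n : ℕ => ‖a‖ ^ n * ‖y‖) Filter.atTop (nhds 0) := by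
    simpa using (tendsto_pow_atTop_nhds_zero_of_lt_one (norm_nonneg a) ha).mul_const ‖y‖
  have h4 := ge_of_tendsto' h3 h2
  exact norm_le_zero_iff.mp h4

/-- non-negative quadrant -/
def Hs (d : ℕ) : Set (Fin d → ℤ) := {k | ∀ r, 0 ≤ k r}

/-- the shifted part, negative in the direction `q` -/
def Es {d : ℕ} (q : Fin d) : Set (Fin d → ℤ) := {k | (∀ r, r ≠ q → 0 ≤ k r) ∧ k q < 0}

lemma norm_zc (r : Fin d) : ‖(zc r : C(UnitAddTorus (Fin d), ℂ))‖ = 1 := mFourier_norm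

lemma exists_inv {a : ℂ} (ha : ‖a‖ < 1) (r : Fin d) :
    ∃ g : C(UnitAddTorus (Fin d), ℂ), g = 1 + a • (zc r * g) := by
  have h : ‖a • (zc r : C(UnitAddTorus (Fin d), ℂ))‖ < 1 := by
    rw [norm_smul, norm_zc, mul_one]; exact ha
  refine ⟨((Units.oneSub _ h)⁻¹ : Units _), ?_⟩
  have h1 := (Units.oneSub _ h).mul_inv
  rw [Units.val_oneSub, sub_mul, one_mul] at h1
  rw [← smul_mul_assoc]
  exact sub_eq_iff_eq_add.mp h1

lemma Hs_add (k : Fin d → ℤ) (r : Fin d) (hk : k ∈ Hs d) : k + Pi.single r 1 ∈ Hs d := by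
  intro s
  have h1 := hk s
  have h2 : (0:ℤ) ≤ (Pi.single r 1 : Fin d → ℤ) s := by
    by_cases h : s = r
    · subst h; simp
    · simp [h]
  simp only [Pi.add_apply]; omega

include hMs hMb in
/-- Partial kernel vectors. -/
lemma exists_kernel (lam : Fin d → ℂ) (hl : ∀ r, ‖lam r‖ < 1) :
    ∃ y : Finset (Fin d) → L, y ∅ = b 0 ∧
      (∀ S, ∀ r ∈ S, y S = y (S.erase r) + starRingEnd ℂ (lam r) • M (zc r) (y S)) ∧
      (∀ S, Supp b (Hs d) (y S)) ∧
      (∀ S r, r ∉ S → Supp b {k | k r = 0} (y S)) ∧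
      (∀ S, inner ℂ (b 0) (y S) = 1) := by
  classical
  choose g hg using fun r => exists_inv (d := d) (a := starRingEnd ℂ (lam r))
    (by simpa using hl r) r
  have hrec : ∀ S : Finset (Fin d), ∀ r ∈ S, M (∏ s ∈ S, g s) (b 0) =
      M (∏ s ∈ S.erase r, g s) (b 0) +
        starRingEnd ℂ (lam r) • M (zc r) (M (∏ s ∈ S, g s) (b 0)) := by
    intro S r hr
    have h1 : ∏ s ∈ S, g s = ∏ s ∈ S.erase r, g s +
        starRingEnd ℂ (lam r) • (zc r * ∏ s ∈ S, g s) := by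
      rw [← Finset.mul_prod_erase S g hr, ← mul_assoc, ← smul_mul_assoc]
      nth_rewrite 1 [hg r]
      rw [add_mul, one_mul]
    rw [← mul_app]
    nth_rewrite 1 [h1]
    simp
  have hH : ∀ S : Finset (Fin d), Supp b (Hs d) (M (∏ s ∈ S, g s) (b 0)) := by
    intro S
    induction S using Finset.induction_on with
    | empty =>
      intro k hk
      have : k ≠ 0 := by rintro rfl; exact hk (fun r => le_rfl)
      simpa using b.orthonormal.inner_eq_zero this
    | insert r S hr ih =>
      have h1 := hrec (insert r S) r (Finset.mem_insert_self _ _)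
      rw [Finset.erase_insert hr] at h1
      exact supp_inv b M hMs hMb (fun k hk => Hs_add k r hk) (by simpa using hl r) ih h1
  refine ⟨fun S => M (∏ s ∈ S, g s) (b 0), by simp, hrec, hH, ?_, ?_⟩
  · intro S r
    induction S using Finset.induction_on with
    | empty =>
      intro _ k hk
      have : k ≠ 0 := by rintro rfl; exact hk rfl
      simpa using b.orthonormal.inner_eq_zero this
    | insert s S hs ih =>
      intro hr
      rw [Finset.mem_insert, not_or] at hr
      have h1 := hrec (insert s S) s (Finset.mem_insert_self _ _)
      rw [Finset.erase_insert hs] at h1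
      refine supp_inv b M hMs hMb ?_ (by simpa using hl s) (ih hr.2) h1
      intro k hk
      have hk' : k r = 0 := hk
      simp [hr.1, hk']
  · intro S
    induction S using Finset.induction_on with
    | empty => simp [b.orthonormal.1]
    | insert s S hs ih =>
      have h1 := hrec (insert s S) s (Finset.mem_insert_self _ _)
      rw [Finset.erase_insert hs] at h1
      simp only at ih ⊢
      rw [h1, inner_add_right, ih, inner_smul_right, coef_shift b M hMs hMb, hH _ _ ?_]
      · simp
      · intro h
        have := h s
        simp at this

include hMs hMb in
lemma kernel_adj {P : L →L[ℂ] L}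
    (hP1 : ∀ k x, k ∈ Hs d → inner ℂ (b k) (P x) = inner ℂ (b k) x)
    (hP2 : ∀ k x, k ∉ Hs d → inner ℂ (b k) (P x) = 0)
    {lam : Fin d → ℂ} {y : Finset (Fin d) → L}
    (h1 : ∀ S, ∀ r ∈ S, y S = y (S.erase r) + starRingEnd ℂ (lam r) • M (zc r) (y S))
    (h2 : ∀ S, Supp b (Hs d) (y S))
    (h3 : ∀ S r, r ∉ S → Supp b {k | k r = 0} (y S)) (r : Fin d) :
    P (M (star (zc r)) (y univ)) = starRingEnd ℂ (lam r) • y univ := by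
  apply basis_ext b
  intro k
  by_cases hk : k ∈ Hs d
  · rw [hP1 _ _ hk, star_mFourier, coef_shift b M hMs hMb, h1 univ r (mem_univ r),
      inner_add_right, h3 _ r (notMem_erase r univ), zero_add, ← h1 univ r (mem_univ r),
      inner_smul_right, inner_smul_right, coef_shift b M hMs hMb]
    · simp
    · have := hk r
      simp
      omega
  · rw [hP2 _ _ hk, inner_smul_right, h2 _ _ hk, mul_zero]

include hMs hMb in
lemma gram {P : L →L[ℂ] L}
    (hP1 : ∀ k x, k ∈ Hs d → inner ℂ (b k) (P x) = inner ℂ (b k) x)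
    (hP2 : ∀ k x, k ∉ Hs d → inner ℂ (b k) (P x) = 0)
    (hPs : ∀ x y, inner ℂ (P x) y = inner ℂ x (P y))
    {lam mu : Fin d → ℂ} {y : Finset (Fin d) → L} {z : L}
    (h0 : y ∅ = b 0)
    (h1 : ∀ S, ∀ r ∈ S, y S = y (S.erase r) + starRingEnd ℂ (lam r) • M (zc r) (y S))
    (h2 : ∀ S, Supp b (Hs d) (y S))
    (hz : inner ℂ (b 0) z = 1)
    (hz' : ∀ r, P (M (star (zc r)) z) = starRingEnd ℂ (mu r) • z) (S : Finset (Fin d)) :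
    (∏ r ∈ S, (1 - lam r * starRingEnd ℂ (mu r))) * inner ℂ (y S) z = 1 := by
  induction S using Finset.induction_on with
  | empty => simp [h0, hz]
  | insert r S hr ih =>
    have e := h1 (insert r S) r (mem_insert_self r S)
    rw [erase_insert hr] at e
    have hPy : P (y (insert r S)) = y (insert r S) := by
      apply basis_ext b
      intro k
      by_cases hk : k ∈ Hs d
      · rw [hP1 _ _ hk]
      · rw [hP2 _ _ hk, h2 _ _ hk]
    have e2 : inner ℂ (y (insert r S)) z = inner ℂ (y S) z +
        lam r * (starRingEnd ℂ (mu r) * inner ℂ (y (insert r S)) z) := by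
      conv_lhs => rw [e]
      rw [inner_add_left, inner_smul_left, ← inner_smul_right (y (insert r S)), ← hz', ← hPs, hPy,
        ← inner_conj_symm _ (M (star (zc r)) z), hMs, inner_conj_symm]
      simp
    rw [prod_insert hr]
    linear_combination ih + (∏ r ∈ S, (1 - lam r * starRingEnd ℂ (mu r))) * e2

include hMs hMb in
lemma kernel_poly {P : L →L[ℂ] L}
    (hP1 : ∀ k x, k ∈ Hs d → inner ℂ (b k) (P x) = inner ℂ (b k) x)
    (hP2 : ∀ k x, k ∉ Hs d → inner ℂ (b k) (P x) = 0)
    (hPs : ∀ x y, inner ℂ (P x) y = inner ℂ x (P y))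
    {mu : Fin d → ℂ} {z : L} (hPz : P z = z)
    (hz' : ∀ r, P (M (star (zc r)) z) = starRingEnd ℂ (mu r) • z) (f : MvPolynomial (Fin d) ℂ) :
    P (M (star (MvPolynomial.aeval zc f)) z) =
      starRingEnd ℂ (MvPolynomial.eval mu f) • z := by
  induction f using MvPolynomial.induction_on with
  | C a =>
    have : star (MvPolynomial.aeval zc (MvPolynomial.C a : MvPolynomial (Fin d) ℂ) :
        C(UnitAddTorus (Fin d), ℂ)) = (starRingEnd ℂ a) • 1 := by
      rw [MvPolynomial.aeval_C]; ext t; simp [algebraMap_apply]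
    rw [this]
    simp [hPz]
  | add f g hf hg =>
    simp [hf, hg, add_smul]
  | mul_X f r hf =>
    have key : ∀ h : L, P (M (star (MvPolynomial.aeval zc f)) (P h)) =
        P (M (star (MvPolynomial.aeval zc f)) h) := by
      intro h
      apply basis_ext b
      intro k
      rw [← hPs, ← hPs, ← inner_conj_symm _ (M _ (P h)), ← inner_conj_symm _ (M _ h), hMs, hMs,
        inner_conj_symm, inner_conj_symm, ← hPs]
      congr 1
      apply basis_ext b
      intro m
      by_cases hm : m ∈ Hs d
      · rw [hP1 _ _ hm]
      · rw [hP2 _ _ hm]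
        symm
        exact supp_poly b M hMs hMb (fun k r hk => Hs_add k r hk) f _ (fun k hk => hP2 k _ hk) m hm
    rw [map_mul, MvPolynomial.aeval_X, star_mul', mul_app, ← key, hz', map_smul, map_smul, hf,
      map_mul, MvPolynomial.eval_X, map_mul, smul_smul, mul_comm]

include hMs hMn hMb in
lemma poly_pick_aux {N : ℕ} (f : MvPolynomial (Fin d) ℂ) {c : ℝ} (hc0 : 0 ≤ c) (hc : c < 1)
    (hf : ∀ z : Fin d → ℂ, (∀ r, ‖z r‖ ≤ 1) → ‖MvPolynomial.eval z f‖ ≤ c)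
    (lam : Fin N → Fin d → ℂ) (hlam : ∀ i r, ‖lam i r‖ < 1) {p q : Fin d} (hpq : p ≠ q) :
    ∃ Γp Γq : Matrix (Fin N) (Fin N) ℂ, Γp.PosSemidef ∧ Γq.PosSemidef ∧
        ∀ i j, 1 - MvPolynomial.eval (lam i) f * starRingEnd ℂ (MvPolynomial.eval (lam j) f) =
          (∏ r ∈ Finset.univ.erase q, (1 - lam i r * starRingEnd ℂ (lam j r))) * Γq i j +
          (∏ r ∈ Finset.univ.erase p, (1 - lam i r * starRingEnd ℂ (lam j r))) * Γp i j := by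
  classical
  obtain ⟨P, hP1, hP2, hPs, hPn⟩ := exists_proj b (Hs d)
  obtain ⟨Q, hQ1, hQ2, hQs, hQn⟩ := exists_proj b (Es q)
  choose y h0 h1 h2 h3 h4 using fun i => exists_kernel b M hMs hMb (lam i) (hlam i)
  set F : C(UnitAddTorus (Fin d), ℂ) := MvPolynomial.aeval zc f with hF
  have hFn : ‖F‖ ≤ c := by
    rw [ContinuousMap.norm_le _ hc0]
    intro t
    have e : F t = MvPolynomial.eval (fun r => zc r t) f := by
      rw [hF]
      clear hf hF F
      induction f using MvPolynomial.induction_on with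
      | C a => simp [algebraMap_apply]
      | add f g hf hg => simp [hf, hg]
      | mul_X f r hf => simp [hf]
    rw [e]
    apply hf
    intro r
    calc ‖zc r t‖ ≤ ‖(zc r : C(UnitAddTorus (Fin d), ℂ))‖ := ContinuousMap.norm_coe_le_norm _ t
      _ = 1 := norm_zc r
      _ ≤ 1 := le_rfl
  have hdis : ∀ k, k ∈ Hs d → k ∉ Es q := fun k hk hk' => absurd (hk q) (not_le.mpr hk'.2)
  have hPH : ∀ x, Supp b (Hs d) (P x) := fun x k hk => hP2 k x hk
  have hQE : ∀ x, Supp b (Es q) (Q x) := fun x k hk => hQ2 k x hk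
  have hPe : ∀ x, Supp b (Hs d) x → P x = x := by
    intro x hx
    apply basis_ext b
    intro k
    by_cases hk : k ∈ Hs d
    · rw [hP1 _ _ hk]
    · rw [hP2 _ _ hk, hx _ hk]
  have hQe : ∀ x, Supp b (Es q) x → Q x = x := by
    intro x hx
    apply basis_ext b
    intro k
    by_cases hk : k ∈ Es q
    · rw [hQ1 _ _ hk]
    · rw [hQ2 _ _ hk, hx _ hk]
  have hPE : ∀ x, Supp b (Es q) x → P x = 0 := by
    intro x hx
    apply basis_ext b
    intro k
    by_cases hk : k ∈ Hs d
    · rw [hP1 _ _ hk, hx _ (hdis k hk), inner_zero_right]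
    · rw [hP2 _ _ hk, inner_zero_right]
  have hQH : ∀ x, Supp b (Hs d) x → Q x = 0 := by
    intro x hx
    apply basis_ext b
    intro k
    by_cases hk : k ∈ Es q
    · rw [hQ1 _ _ hk, hx _ (fun h => hdis k h hk), inner_zero_right]
    · rw [hQ2 _ _ hk, inner_zero_right]
  -- coefficients of `P + Q`
  let U : Set (Fin d → ℤ) := {k | ∀ r, r ≠ q → 0 ≤ k r}
  have hU1 : ∀ k x, k ∈ U → inner ℂ (b k) (P x + Q x) = inner ℂ (b k) x := by
    intro k x hk
    rw [inner_add_right]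
    by_cases hq : 0 ≤ k q
    · have hkH : k ∈ Hs d := by
        intro r
        by_cases hr : r = q
        · rw [hr]; exact hq
        · exact hk r hr
      rw [hP1 _ _ hkH, hQ2 _ _ (hdis k hkH), add_zero]
    · have hkE : k ∈ Es q := ⟨hk, not_le.mp hq⟩
      rw [hQ1 _ _ hkE, hP2 _ _ (fun h => hdis k h hkE), zero_add]
  have hU2 : ∀ k x, k ∉ U → inner ℂ (b k) (P x + Q x) = 0 := by
    intro k x hk
    rw [inner_add_right, hP2 _ _ (fun h => hk (fun r _ => h r)), hQ2 _ _ (fun h => hk h.1),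
      add_zero]
  have hUe : ∀ x, Supp b U x → x = P x + Q x := by
    intro x hx
    apply basis_ext b
    intro k
    by_cases hk : k ∈ U
    · rw [hU1 _ _ hk]
    · rw [hU2 _ _ hk, hx _ hk]
  have hUadd : ∀ k r, k ∈ U → k + Pi.single r 1 ∈ U := by
    intro k r hk s hs
    have h1 := hk s hs
    have h2 : (0:ℤ) ≤ (Pi.single r 1 : Fin d → ℤ) s := by
      by_cases h : s = r
      · subst h; simp
      · simp [h]
    simp only [Pi.add_apply]; omega
  have hle : ∀ x : L, c * ‖x‖ ≤ ‖x‖ := fun x => by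
    have := norm_nonneg x
    nlinarith
  have hstarn : ‖star F‖ ≤ c := by
    rw [ContinuousMap.norm_le _ hc0]
    intro t
    rw [ContinuousMap.star_apply, norm_star]
    exact (F.norm_coe_le_norm t).trans hFn
  have hS : Setup P Q (M F) (M (star F)) := by
    refine ⟨fun x => hPe _ (hPH x), fun x => hQe _ (hQE x), fun x => hPE _ (hQE x),
      fun x => hQH _ (hPH x), hPs, hQs, hMs F, ?_, ?_, ?_, ?_, hQn⟩
    · intro x
      exact hUe _ (supp_poly b M hMs hMb hUadd f _ (fun k hk => hQ2 k x (fun h => hk h.1)))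
    · intro x
      exact hQH _ (supp_poly b M hMs hMb Hs_add f _ (hPH x))
    · intro x
      exact ((hMn F x).trans (by gcongr)).trans (hle x)
    · intro x
      exact ((hMn (star F) x).trans (by gcongr)).trans (hle x)
  have hk : ∀ i, P (y i univ) = y i univ := fun i => hPe _ (h2 i univ)
  have hadj : ∀ i r, P (M (star (zc r)) (y i univ)) = starRingEnd ℂ (lam i r) • y i univ :=
    fun i r => kernel_adj b M hMs hMb hP1 hP2 (h1 i) (h2 i) (h3 i) r
  obtain ⟨G1, G2, hG2, hG1, hG⟩ := abstract_pick hS hc0 hc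
    (fun x => (hMn F x).trans (by gcongr))
    (v := M (zc p)) (vd := M (star (zc p))) (zd := M (star (zc q)))
    (hMs (zc p)) (fun x => norm_shift M hMs _ x) (fun x => app_comm M _ _ x)
    (fun x => hQe _ (by
      intro k hk
      rw [coef_shift b M hMs hMb]
      apply hQ2
      intro h
      apply hk
      have hs : ∀ s, k s = (k - Pi.single p 1 : Fin d → ℤ) s + (Pi.single p 1 : Fin d → ℤ) s := by
        intro s; simp
      refine ⟨fun r hr => ?_, ?_⟩
      · have a1 := h.1 r hr
        have a2 : (0:ℤ) ≤ (Pi.single p 1 : Fin d → ℤ) r := by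
          by_cases h : r = p
          · subst h; simp
          · simp [h]
        rw [hs]; omega
      · rw [hs]
        have a1 := h.2
        have a2 : (Pi.single p 1 : Fin d → ℤ) q = 0 := by simp [hpq.symm]
        omega))
    (fun x => hQH _ (by
      intro k hk
      rw [coef_shift b M hMs hMb]
      apply hP2
      intro h
      apply hk
      have := Hs_add _ p h
      simpa using this))
    (fun x => by rw [star_mFourier]; exact norm_shift M hMs _ x) (fun x => app_comm M _ _ x)
    (fun x => by
      rw [star_mFourier]
      apply basis_ext b
      intro k
      rw [coef_shift b M hMs hMb]
      have hiff : k - -Pi.single q 1 ∈ U ↔ k ∈ U := by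
        constructor <;> intro h r hr <;> simpa [hr] using h r hr
      by_cases hk : k ∈ U
      · rw [hU1 _ _ hk, hU1 _ _ (hiff.mpr hk), coef_shift b M hMs hMb]
      · rw [hU2 _ _ hk, hU2 _ _ (fun h => hk (hiff.mp h))])
    (fun x => by
      rw [star_mFourier]
      apply basis_ext b
      intro k
      by_cases hk : k ∈ Hs d
      · rw [hP1 _ _ hk, coef_shift b M hMs hMb, hQ2, inner_zero_right]
        intro h
        have a1 := h.2
        have a2 := hk q
        simp at a1
        omega
      · rw [hP2 _ _ hk, inner_zero_right])
    (fun i => y i univ) hk (fun i => MvPolynomial.eval (lam i) f) (fun i => lam i p)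
    (fun i => lam i q)
    (fun i => kernel_poly b M hMs hMb hP1 hP2 hPs (hk i) (hadj i) f)
    (fun i => hadj i p) (fun i => hadj i q)
  refine ⟨_, _, hG2, hG1, ?_⟩
  intro i j
  have hg := gram b M hMs hMb hP1 hP2 hPs (h0 i) (h1 i) (h2 i) (h4 j univ) (hadj j) univ
  have hij := hG i j
  have ep := Finset.prod_erase_mul univ (fun r => 1 - lam i r * starRingEnd ℂ (lam j r)) (mem_univ p)
  have eq := Finset.prod_erase_mul univ (fun r => 1 - lam i r * starRingEnd ℂ (lam j r)) (mem_univ q)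
  simp only [Matrix.of_apply]
  rw [← mul_assoc, ← mul_assoc, ep, eq, ← mul_add, hij]
  linear_combination -(1 - MvPolynomial.eval (lam i) f *
    starRingEnd ℂ (MvPolynomial.eval (lam j) f)) * hg

end Poly

section Model2

open MeasureTheory

lemma poly_pick {d N : ℕ} (f : MvPolynomial (Fin d) ℂ) {c : ℝ} (hc0 : 0 ≤ c) (hc : c < 1)
    (hf : ∀ z : Fin d → ℂ, (∀ r, ‖z r‖ ≤ 1) → ‖MvPolynomial.eval z f‖ ≤ c)
    (lam : Fin N → Fin d → ℂ) (hlam : ∀ i r, ‖lam i r‖ < 1) {p q : Fin d} (hpq : p ≠ q) :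
    ∃ Γp Γq : Matrix (Fin N) (Fin N) ℂ, Γp.PosSemidef ∧ Γq.PosSemidef ∧
        ∀ i j, 1 - MvPolynomial.eval (lam i) f * starRingEnd ℂ (MvPolynomial.eval (lam j) f) =
          (∏ r ∈ Finset.univ.erase q, (1 - lam i r * starRingEnd ℂ (lam j r))) * Γq i j +
          (∏ r ∈ Finset.univ.erase p, (1 - lam i r * starRingEnd ℂ (lam j r))) * Γp i j := by
  obtain ⟨b, M, h1, h2, h3⟩ := exists_model d
  exact poly_pick_aux b M h1 h2 h3 f hc0 hc hf lam hlam hpq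

end Model2


/-! ### Part 5: passing to the limit -/

lemma approx_main {d N : ℕ} (lam : Fin N → Fin d → ℂ) (hlam : ∀ i, lam i ∈ Polydisk d)
    {φ : (Fin d → ℂ) → ℂ} (hd : DifferentiableOn ℂ φ (Polydisk d))
    (hb : ∀ z ∈ Polydisk d, ‖φ z‖ ≤ 1) {ε : ℝ} (hε : 0 < ε) :
    ∃ (f : MvPolynomial (Fin d) ℂ) (c : ℝ), 0 ≤ c ∧ c < 1 ∧
      (∀ z : Fin d → ℂ, (∀ r, ‖z r‖ ≤ 1) → ‖MvPolynomial.eval z f‖ ≤ c) ∧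
      ∀ i, ‖MvPolynomial.eval (lam i) f - φ (lam i)‖ ≤ ε := by
  have hopen : IsOpen (Polydisk d) := by
    have : Polydisk d = ⋂ r, {z : Fin d → ℂ | ‖z r‖ < 1} := by ext z; simp [Polydisk]
    rw [this]
    exact isOpen_iInter_of_finite fun r => isOpen_lt (by fun_prop) continuous_const
  have hs : ∃ s : ℝ, 0 < s ∧ s < 1 ∧ ∀ i, ‖φ ((s : ℂ) • lam i) - φ (lam i)‖ < ε / 4 := by
    have h1 : ∀ i, ∀ᶠ s : ℝ in nhds 1, ‖φ ((s : ℂ) • lam i) - φ (lam i)‖ < ε / 4 := by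
      intro i
      have hc : ContinuousAt φ (lam i) := (hd.differentiableAt (hopen.mem_nhds (hlam i))).continuousAt
      have hg : Filter.Tendsto (fun s : ℝ => (s : ℂ) • lam i) (nhds 1) (nhds (lam i)) := by
        have : Continuous (fun s : ℝ => (s : ℂ) • lam i) := by fun_prop
        simpa using this.tendsto 1
      have h2 := (hc.tendsto.comp hg)
      have h3 := Metric.tendsto_nhds.mp h2 (ε / 4) (by positivity)
      filter_upwards [h3] with s hs
      rwa [← dist_eq_norm]
    have h2 : ∀ᶠ s : ℝ in nhdsWithin 1 (Set.Iio 1), 0 < s ∧ s < 1 ∧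
        ∀ i, ‖φ ((s : ℂ) • lam i) - φ (lam i)‖ < ε / 4 := by
      have h3 : ∀ᶠ s : ℝ in nhds 1, 0 < s := lt_mem_nhds one_pos
      filter_upwards [nhdsWithin_le_nhds (Filter.eventually_all.mpr h1), nhdsWithin_le_nhds h3,
        self_mem_nhdsWithin] with s h1 h2 h3
      exact ⟨h2, h3, h1⟩
    exact h2.exists
  obtain ⟨s, hs0, hs1, hs⟩ := hs
  have hmem : ∀ z : Fin d → ℂ, (∀ r, ‖z r‖ < s⁻¹) → (s : ℂ) • z ∈ Polydisk d := by
    intro z hz r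
    have := hz r
    rw [Pi.smul_apply, smul_eq_mul, norm_mul, Complex.norm_real, Real.norm_of_nonneg hs0.le]
    calc s * ‖z r‖ < s * s⁻¹ := by gcongr
      _ = 1 := mul_inv_cancel₀ hs0.ne'
  have hA : Approx (fun z => φ ((s : ℂ) • z)) := by
    refine approx_of_dep (R := s⁻¹) ((one_lt_inv₀ hs0).mpr hs1) univ _ ?_ ?_ ?_
    · exact hd.comp (by fun_prop) (fun z hz => hmem z hz)
    · intro z hz
      exact hb _ (hmem z hz)
    · intro z z' h
      have : z = z' := funext fun r => h r (mem_univ r)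
      rw [this]
  obtain ⟨f, hf⟩ := hA (ε / 4) (by positivity)
  have hR : (1:ℝ) < s⁻¹ := (one_lt_inv₀ hs0).mpr hs1
  have hfb : ∀ z : Fin d → ℂ, (∀ r, ‖z r‖ ≤ 1) → ‖MvPolynomial.eval z f‖ ≤ 1 + ε / 4 := by
    intro z hz
    have h1 := hf z hz
    have h2 := hb _ (hmem z (fun r => (hz r).trans_lt hR))
    have h3 : ‖MvPolynomial.eval z f‖ ≤ ‖φ ((s : ℂ) • z)‖ +
        ‖φ ((s : ℂ) • z) - MvPolynomial.eval z f‖ := by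
      rw [norm_sub_rev]; exact norm_le_insert' _ _
    linarith
  have hpos : (0:ℝ) < 1 + ε / 2 := by positivity
  refine ⟨MvPolynomial.C (((1 + ε / 2)⁻¹ : ℝ) : ℂ) * f, (1 + ε / 2)⁻¹ * (1 + ε / 4),
    by positivity, ?_, ?_, ?_⟩
  · rw [inv_mul_lt_iff₀ hpos]; linarith
  · intro z hz
    rw [map_mul, MvPolynomial.eval_C, norm_mul, Complex.norm_real,
      Real.norm_of_nonneg (by positivity)]
    gcongr
    exact hfb z hz
  · intro i
    have hz : ∀ r, ‖lam i r‖ ≤ 1 := fun r => (hlam i r).le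
    have h1 := hf _ hz
    have h2 := hfb _ hz
    have h3 := (hs i).le
    rw [map_mul, MvPolynomial.eval_C]
    have e : (((1 + ε / 2)⁻¹ : ℝ) : ℂ) * MvPolynomial.eval (lam i) f - φ (lam i) =
      (φ ((s : ℂ) • lam i) - φ (lam i)) - (φ ((s : ℂ) • lam i) - MvPolynomial.eval (lam i) f) -
        ((1 - (1 + ε / 2)⁻¹ : ℝ) : ℂ) * MvPolynomial.eval (lam i) f := by
      push_cast; ring
    have h4 : ‖((1 - (1 + ε / 2)⁻¹ : ℝ) : ℂ) * MvPolynomial.eval (lam i) f‖ ≤ ε / 2 := by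
      have e2 : 1 - (1 + ε / 2)⁻¹ = (ε / 2) * (1 + ε / 2)⁻¹ := by field_simp; ring
      rw [norm_mul, Complex.norm_real, e2, Real.norm_of_nonneg (by positivity)]
      calc ε / 2 * (1 + ε / 2)⁻¹ * ‖MvPolynomial.eval (lam i) f‖
          ≤ ε / 2 * (1 + ε / 2)⁻¹ * (1 + ε / 2) := by
            gcongr; linarith
        _ = ε / 2 := by field_simp
    rw [e]
    refine (norm_sub_le _ _).trans ?_
    have h5 := norm_sub_le (φ ((s : ℂ) • lam i) - φ (lam i))
      (φ ((s : ℂ) • lam i) - MvPolynomial.eval (lam i) f)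
    linarith

lemma entry_bound {N : ℕ} {A : Matrix (Fin N) (Fin N) ℂ} (hA : A.PosSemidef) {B : ℝ}
    (hB : ∀ i, ‖A i i‖ ≤ B) (i j : Fin N) : ‖A i j‖ ≤ B := by
  have h1 := (hA.submatrix ![i, j]).det_nonneg
  rw [Matrix.det_fin_two] at h1
  simp only [Matrix.submatrix_apply, Matrix.cons_val_zero, Matrix.cons_val_one] at h1
  have h2 : A j i = star (A i j) := (hA.1.apply j i).symm
  have h3 : A i j * star (A i j) = ((‖A i j‖ ^ 2 : ℝ) : ℂ) := by
    rw [Complex.star_def, Complex.mul_conj, Complex.normSq_eq_norm_sq]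
  have h4 : ∀ i, A i i = (‖A i i‖ : ℂ) := fun i =>
    (Complex.norm_of_nonneg' hA.diag_nonneg).symm
  rw [h2, h3, h4 i, h4 j, ← Complex.ofReal_mul, ← Complex.ofReal_sub] at h1
  have h5 : 0 ≤ ‖A i i‖ * ‖A j j‖ - ‖A i j‖ ^ 2 := by exact_mod_cast h1
  have hB0 : 0 ≤ B := (norm_nonneg _).trans (hB i)
  have h6 : ‖A i i‖ * ‖A j j‖ ≤ B * B := mul_le_mul (hB i) (hB j) (norm_nonneg _) hB0
  nlinarith [norm_nonneg (A i j)]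

lemma posSemidef_lim {N : ℕ} {A : ℕ → Fin N → Fin N → ℂ} {a : Fin N → Fin N → ℂ}
    (hA : ∀ n, (Matrix.of (A n)).PosSemidef)
    (h : ∀ i j, Filter.Tendsto (fun n => A n i j) Filter.atTop (nhds (a i j))) :
    (Matrix.of a).PosSemidef := by
  refine Matrix.PosSemidef.of_dotProduct_mulVec_nonneg ?_ ?_
  · ext i j
    have h1 : ∀ n, star (A n j i) = A n i j := fun n => (hA n).1.apply i j
    have h2 := (h j i).star
    simp only [h1] at h2
    exact tendsto_nhds_unique h2 (h i j)
  · intro x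
    have h1 : Filter.Tendsto (fun n => star x ⬝ᵥ (Matrix.of (A n) *ᵥ x)) Filter.atTop
        (nhds (star x ⬝ᵥ (Matrix.of a *ᵥ x))) := by
      simp only [dotProduct, Matrix.mulVec, Matrix.of_apply]
      refine tendsto_finsetSum _ fun i _ => Filter.Tendsto.const_mul _ ?_
      exact tendsto_finsetSum _ fun j _ => (h i j).mul_const _
    exact ge_of_tendsto' h1 fun n => (hA n).dotProduct_mulVec_nonneg x

lemma diag_bound {d N : ℕ} {lam : Fin N → Fin d → ℂ} (hlam : ∀ i r, ‖lam i r‖ < 1) (q : Fin d) :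
    ∃ B : ℝ, ∀ (i : Fin N) (g : ℝ), 0 ≤ g →
      (∏ r ∈ univ.erase q, (1 - ‖lam i r‖ ^ 2)) * g ≤ 1 → g ≤ B := by
  have hp : ∀ i, 0 < ∏ r ∈ univ.erase q, (1 - ‖lam i r‖ ^ 2) := fun i =>
    prod_pos fun r _ => by
      have := hlam i r
      nlinarith [norm_nonneg (lam i r)]
  refine ⟨∑ i, (∏ r ∈ univ.erase q, (1 - ‖lam i r‖ ^ 2))⁻¹, fun i g hg h => ?_⟩
  calc g ≤ (∏ r ∈ univ.erase q, (1 - ‖lam i r‖ ^ 2))⁻¹ := by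
        rw [← one_div, le_div_iff₀ (hp i)]; linarith
    _ ≤ _ := single_le_sum (f := fun i => (∏ r ∈ univ.erase q, (1 - ‖lam i r‖ ^ 2))⁻¹)
        (fun j _ => (inv_pos.mpr (hp j)).le) (mem_univ i)

end GKVW


/-- **Grinshpan–Kaliuzhnyi-Verbovetskyi–Vinnikov–Woerdeman necessary condition for Pick
interpolation on the polydisk.** If there is an analytic `φ : 𝔻^d → ℂ` with
`sup_{𝔻^d}|φ| ≤ 1` and `φ(λᵢ) = wᵢ`, then for every `1 ≤ p < q ≤ d` there are positive
semi-definite `N × N` matrices `Γ^p, Γ^q` with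
`1 - wᵢw̄ⱼ = ∏_{r ≠ q}(1 - λᵢʳλ̄ⱼʳ) Γ^qᵢⱼ + ∏_{r ≠ p}(1 - λᵢʳλ̄ⱼʳ) Γ^pᵢⱼ` for all `i, j`. -/
theorem gkvw_necessary_condition {d N : ℕ} (lam : Fin N → Fin d → ℂ) (w : Fin N → ℂ)
    (hlam : ∀ i, lam i ∈ Polydisk d)
    (hφ : ∃ φ : (Fin d → ℂ) → ℂ, DifferentiableOn ℂ φ (Polydisk d) ∧
      (∀ z ∈ Polydisk d, ‖φ z‖ ≤ 1) ∧ ∀ i, φ (lam i) = w i) :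
    ∀ p q : Fin d, p < q →
      ∃ Γp Γq : Matrix (Fin N) (Fin N) ℂ, Γp.PosSemidef ∧ Γq.PosSemidef ∧
        ∀ i j, 1 - w i * starRingEnd ℂ (w j) =
          (∏ r ∈ Finset.univ.erase q, (1 - lam i r * starRingEnd ℂ (lam j r))) * Γq i j +
          (∏ r ∈ Finset.univ.erase p, (1 - lam i r * starRingEnd ℂ (lam j r))) * Γp i j := by
  intro p q hpq
  obtain ⟨φ, hd, hb, hw⟩ := hφ
  have hl : ∀ i r, ‖lam i r‖ < 1 := hlam
  choose f c hc0 hc1 hfc hfw using fun n : ℕ =>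
    GKVW.approx_main lam hlam hd hb (ε := 1 / ((n : ℝ) + 1)) (by positivity)
  choose A B hA hB hAB using fun n : ℕ =>
    GKVW.poly_pick (f n) (hc0 n) (hc1 n) (hfc n) lam hl hpq.ne
  have hfl : ∀ i, Filter.Tendsto (fun n => MvPolynomial.eval (lam i) (f n)) Filter.atTop
      (nhds (w i)) := by
    intro i
    rw [tendsto_iff_norm_sub_tendsto_zero]
    refine squeeze_zero (fun n => norm_nonneg _) (fun n => ?_)
      tendsto_one_div_add_atTop_nhds_zero_nat
    rw [← hw i]
    exact hfw n i
  have hprod : ∀ i s, ∏ r ∈ univ.erase s, (1 - lam i r * starRingEnd ℂ (lam i r)) =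
      ((∏ r ∈ univ.erase s, (1 - ‖lam i r‖ ^ 2) : ℝ) : ℂ) := by
    intro i s
    push_cast
    refine prod_congr rfl fun r _ => ?_
    rw [Complex.mul_conj, Complex.normSq_eq_norm_sq]
    push_cast
    rfl
  have hprod0 : ∀ i s, 0 ≤ ∏ r ∈ univ.erase s, (1 - ‖lam i r‖ ^ 2) := fun i s =>
    prod_nonneg fun r _ => by
      have := hl i r
      nlinarith [norm_nonneg (lam i r)]
  have hdiag : ∀ n i, (∏ r ∈ univ.erase q, (1 - ‖lam i r‖ ^ 2)) * ‖B n i i‖ ≤ 1 ∧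
      (∏ r ∈ univ.erase p, (1 - ‖lam i r‖ ^ 2)) * ‖A n i i‖ ≤ 1 := by
    intro n i
    have h1 := hAB n i i
    rw [hprod, hprod, Complex.mul_conj, Complex.normSq_eq_norm_sq,
      ← Complex.norm_of_nonneg' (hA n).diag_nonneg, ← Complex.norm_of_nonneg' (hB n).diag_nonneg] at h1
    have h2 : 1 - ‖MvPolynomial.eval (lam i) (f n)‖ ^ 2 =
        (∏ r ∈ univ.erase q, (1 - ‖lam i r‖ ^ 2)) * ‖B n i i‖ +
        (∏ r ∈ univ.erase p, (1 - ‖lam i r‖ ^ 2)) * ‖A n i i‖ := by exact_mod_cast h1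
    have h3 := mul_nonneg (hprod0 i q) (norm_nonneg (B n i i))
    have h4 := mul_nonneg (hprod0 i p) (norm_nonneg (A n i i))
    have h5 := sq_nonneg ‖MvPolynomial.eval (lam i) (f n)‖
    constructor <;> linarith
  obtain ⟨b1, hb1⟩ := GKVW.diag_bound hl q
  obtain ⟨b2, hb2⟩ := GKVW.diag_bound hl p
  have hBb : ∀ n i j, ‖B n i j‖ ≤ max b1 b2 := fun n =>
    GKVW.entry_bound (hB n) fun i =>
      (hb1 i _ (norm_nonneg _) (hdiag n i).1).trans (le_max_left _ _)
  have hAb : ∀ n i j, ‖A n i j‖ ≤ max b1 b2 := fun n =>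
    GKVW.entry_bound (hA n) fun i =>
      (hb2 i _ (norm_nonneg _) (hdiag n i).2).trans (le_max_right _ _)
  have hcomp : IsCompact (Set.univ.pi fun _ : Fin N => Set.univ.pi fun _ : Fin N =>
      Metric.closedBall (0 : ℂ) (max b1 b2)) :=
    isCompact_univ_pi fun _ => isCompact_univ_pi fun _ => isCompact_closedBall _ _
  obtain ⟨⟨a, b⟩, -, ψ, hψ, hlim⟩ := (hcomp.prod hcomp).tendsto_subseq
    (x := fun n => ((fun i j => A n i j : Fin N → Fin N → ℂ), (fun i j => B n i j : Fin N → Fin N → ℂ)))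
    (fun n => ⟨fun i _ j _ => by simpa using hAb n i j, fun i _ j _ => by simpa using hBb n i j⟩)
  rw [Prod.tendsto_iff] at hlim
  have hla : ∀ i j, Filter.Tendsto (fun n => A (ψ n) i j) Filter.atTop (nhds (a i j)) := fun i j =>
    tendsto_pi_nhds.mp (tendsto_pi_nhds.mp hlim.1 i) j
  have hlb : ∀ i j, Filter.Tendsto (fun n => B (ψ n) i j) Filter.atTop (nhds (b i j)) := fun i j =>
    tendsto_pi_nhds.mp (tendsto_pi_nhds.mp hlim.2 i) j
  refine ⟨Matrix.of a, Matrix.of b,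
    GKVW.posSemidef_lim (A := fun n i j => A (ψ n) i j) (fun n => hA (ψ n)) hla,
    GKVW.posSemidef_lim (A := fun n i j => B (ψ n) i j) (fun n => hB (ψ n)) hlb, ?_⟩
  intro i j
  have hfi := (hfl i).comp hψ.tendsto_atTop
  have hfj := (Complex.continuous_conj.tendsto _).comp ((hfl j).comp hψ.tendsto_atTop)
  have hL := (hfi.mul hfj).const_sub 1
  have hR := ((hlb i j).const_mul
    (∏ r ∈ Finset.univ.erase q, (1 - lam i r * starRingEnd ℂ (lam j r)))).add
    ((hla i j).const_mul (∏ r ∈ Finset.univ.erase p, (1 - lam i r * starRingEnd ℂ (lam j r))))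
  refine tendsto_nhds_unique hL (hR.congr fun n => ?_)
  exact (hAB (ψ n) i j).symm
end

section
/- (Nevanlinna parametrization) Let λ₁,…,λ_N be distinct points of 𝔻 and w₁,…,w_N ∈ ℂ, and suppose the Pick matrix with (i,j) entry (1 − w_i w̄_j)/(1 − λ_i λ̄_j) is positive definite (in particular invertible). Then there exist analytic functions G₁₁, G₁₂, G₂₁, G₂₂ : 𝔻 → ℂ such that the 2×2 matrix G(λ) = [[G₁₁(λ), G₁₂(λ)],[G₂₁(λ), G₂₂(λ)]] has operator norm at most 1 for every λ ∈ 𝔻, and such that a function φ : 𝔻 → ℂ is analytic with sup_{𝔻}|φ| ≤ 1 and satisfies φ(λ_i) = w_i for all i if and only if there exists an analytic ψ : 𝔻 → ℂ with sup_{𝔻}|ψ| ≤ 1 such that 1 − G₂₂(λ)ψ(λ) ≠ 0 for all λ ∈ 𝔻 and φ = G₁₁ + G₁₂ ψ G₂₁ / (1 − G₂₂ ψ). -/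
open Metric Matrix
open scoped ComplexOrder

namespace NevAux

local notation "conj" => starRingEnd ℂ

/-- The disc automorphism sending `a` to `0`. -/
noncomputable def mob (a z : ℂ) : ℂ := (z - a) / (1 - conj a * z)

lemma den_ne {a z : ℂ} (ha : ‖a‖ < 1) (hz : ‖z‖ ≤ 1) : 1 - conj a * z ≠ 0 := by
  intro h
  have h1 : conj a * z = 1 := (sub_eq_zero.mp h).symm
  have h2 : ‖a‖ * ‖z‖ = 1 := by
    rw [← Complex.norm_conj a, ← norm_mul, h1, norm_one]
  nlinarith [norm_nonneg a, norm_nonneg z]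

lemma normSq_id (a z : ℂ) :
    ‖1 - conj a * z‖ ^ 2 - ‖z - a‖ ^ 2 = (1 - ‖a‖ ^ 2) * (1 - ‖z‖ ^ 2) := by
  simp only [Complex.sq_norm, Complex.normSq_apply, Complex.sub_re, Complex.sub_im,
    Complex.mul_re, Complex.mul_im, Complex.conj_re, Complex.conj_im, Complex.one_re,
    Complex.one_im]
  ring

lemma mob_le {a z : ℂ} (ha : ‖a‖ < 1) (hz : ‖z‖ ≤ 1) : ‖mob a z‖ ≤ 1 := by
  have h0 := norm_pos_iff.mpr (den_ne ha hz)
  rw [mob, norm_div, div_le_one h0]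
  have h := normSq_id a z
  have : 0 ≤ (1 - ‖a‖ ^ 2) * (1 - ‖z‖ ^ 2) :=
    mul_nonneg (by nlinarith [norm_nonneg a]) (by nlinarith [norm_nonneg z])
  exact abs_le_of_sq_le_sq' (by linarith) h0.le |>.2

lemma mob_lt {a z : ℂ} (ha : ‖a‖ < 1) (hz : ‖z‖ < 1) : ‖mob a z‖ < 1 := by
  have h0 := norm_pos_iff.mpr (den_ne ha hz.le)
  rw [mob, norm_div, div_lt_one h0]
  have h := normSq_id a z
  have : 0 < (1 - ‖a‖ ^ 2) * (1 - ‖z‖ ^ 2) :=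
    mul_pos (by nlinarith [norm_nonneg a]) (by nlinarith [norm_nonneg z])
  exact abs_lt_of_sq_lt_sq' (by linarith) h0.le |>.2

lemma self_ne {a : ℂ} (ha : ‖a‖ < 1) : 1 - conj a * a ≠ 0 := den_ne ha ha.le

lemma mob_inv {a z : ℂ} (ha : ‖a‖ < 1) (hz : ‖z‖ ≤ 1) : mob (-a) (mob a z) = z := by
  have h1 := den_ne ha hz
  have h2 := den_ne (a := -a) (by simpa using ha) (mob_le ha hz)
  have h3 := self_ne ha
  rw [mob, div_eq_iff h2]
  simp only [mob, map_neg]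
  obtain ⟨d, hd⟩ : ∃ d, d = 1 - conj a * z := ⟨_, rfl⟩
  rw [← hd] at h1 ⊢
  field_simp
  rw [hd]
  ring

lemma mob_diff {a : ℂ} (ha : ‖a‖ < 1) : DifferentiableOn ℂ (mob a) (ball 0 1) := by
  unfold mob
  apply DifferentiableOn.div (by fun_prop) (by fun_prop)
  intro z hz
  exact den_ne ha (by simpa using (mem_ball_zero_iff.mp hz).le)

/-- Schwarz lemma factorisation. -/
lemma schwarz_factor {a : ℂ} (ha : ‖a‖ < 1) {f : ℂ → ℂ} (hf : DifferentiableOn ℂ f (ball 0 1))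
    (hb : ∀ z ∈ ball (0 : ℂ) 1, ‖f z‖ ≤ 1) (h0 : f a = 0) :
    ∃ g : ℂ → ℂ, DifferentiableOn ℂ g (ball 0 1) ∧ (∀ z ∈ ball (0 : ℂ) 1, ‖g z‖ ≤ 1) ∧
      ∀ z ∈ ball (0 : ℂ) 1, f z = mob a z * g z := by
  have hna : ‖-a‖ < 1 := by simpa using ha
  have maps : ∀ c : ℂ, ‖c‖ < 1 → Set.MapsTo (mob c) (ball 0 1) (ball 0 1) := by
    intro c hc z hz
    rw [mem_ball_zero_iff] at hz ⊢
    exact mob_lt hc hz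
  set F : ℂ → ℂ := fun u => f (mob (-a) u) with hF
  have hFd : DifferentiableOn ℂ F (ball 0 1) := hf.comp (mob_diff hna) (maps _ hna)
  have hF0 : F 0 = 0 := by simp [hF, mob, h0]
  have hFm : Set.MapsTo F (ball 0 1) (closedBall (F 0) 1) := by
    intro z hz
    rw [hF0, mem_closedBall_zero_iff]
    exact hb _ (maps _ hna hz)
  have hsd : DifferentiableOn ℂ (dslope F 0) (ball 0 1) :=
    (Complex.differentiableOn_dslope (isOpen_ball.mem_nhds (mem_ball_self one_pos))).mpr hFd
  refine ⟨fun z => dslope F 0 (mob a z), hsd.comp (mob_diff ha) (maps _ ha), ?_, ?_⟩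
  · intro z hz
    simpa using Complex.norm_dslope_le_div_of_mapsTo_ball hFd hFm (maps _ ha hz)
  · intro z hz
    have := sub_smul_dslope F 0 (mob a z)
    rw [hF0] at this
    simp only [sub_zero, smul_eq_mul] at this
    rw [this, hF]
    simp only
    rw [mob_inv ha (mem_ball_zero_iff.mp hz).le]

lemma unitary_id {w : ℂ} {s : ℝ} (hs : s ^ 2 = 1 - ‖w‖ ^ 2) (a t : ℂ) :
    ‖w * a + s * t‖ ^ 2 + ‖s * a + -conj w * t‖ ^ 2 = ‖a‖ ^ 2 + ‖t‖ ^ 2 := by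
  simp only [Complex.sq_norm, Complex.normSq_apply, Complex.add_re, Complex.add_im,
    Complex.mul_re, Complex.mul_im, Complex.conj_re, Complex.conj_im, Complex.neg_re,
    Complex.neg_im, Complex.ofReal_re, Complex.ofReal_im] at *
  linear_combination (a.re ^ 2 + a.im ^ 2 + t.re ^ 2 + t.im ^ 2) * hs

/-- A contractive colligation maps the closed disc into itself. -/
lemma lft_bound {g11 g12 g21 g22 ζ : ℂ}
    (hG : ∀ a b : ℂ, ‖g11 * a + g12 * b‖ ^ 2 + ‖g21 * a + g22 * b‖ ^ 2 ≤ ‖a‖ ^ 2 + ‖b‖ ^ 2)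
    (hζ : ‖ζ‖ ≤ 1) (hne : 1 - g22 * ζ ≠ 0) :
    ‖g11 + g12 * ζ * g21 / (1 - g22 * ζ)‖ ≤ 1 := by
  have h := hG 1 (ζ * (g21 / (1 - g22 * ζ)))
  have e1 : g11 * 1 + g12 * (ζ * (g21 / (1 - g22 * ζ))) =
      g11 + g12 * ζ * g21 / (1 - g22 * ζ) := by ring
  have e2 : g21 * 1 + g22 * (ζ * (g21 / (1 - g22 * ζ))) = g21 / (1 - g22 * ζ) := by
    field_simp; ring
  rw [e1, e2, norm_mul, norm_one] at h
  set v := ‖g21 / (1 - g22 * ζ)‖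
  have h2 : (‖ζ‖ * v) ^ 2 ≤ v ^ 2 := by
    have hv : 0 ≤ v := norm_nonneg _
    apply pow_le_pow_left₀ (by positivity)
    exact mul_le_of_le_one_left hv hζ
  nlinarith [norm_nonneg (g11 + g12 * ζ * g21 / (1 - g22 * ζ))]

/-- Redheffer product of contractions is a contraction. -/
lemma star_contr {h11 h12 h21 h22 g11 g12 g21 g22 : ℂ}
    (hH : ∀ a b : ℂ, ‖h11 * a + h12 * b‖ ^ 2 + ‖h21 * a + h22 * b‖ ^ 2 ≤ ‖a‖ ^ 2 + ‖b‖ ^ 2)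
    (hG : ∀ a b : ℂ, ‖g11 * a + g12 * b‖ ^ 2 + ‖g21 * a + g22 * b‖ ^ 2 ≤ ‖a‖ ^ 2 + ‖b‖ ^ 2)
    (hne : 1 - h22 * g11 ≠ 0) (a b : ℂ) :
    ‖(h11 + h12 * g11 * h21 / (1 - h22 * g11)) * a + (h12 * g12 / (1 - h22 * g11)) * b‖ ^ 2 +
      ‖(g21 * h21 / (1 - h22 * g11)) * a + (g22 + g21 * h22 * g12 / (1 - h22 * g11)) * b‖ ^ 2
      ≤ ‖a‖ ^ 2 + ‖b‖ ^ 2 := by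
  obtain ⟨d, hd⟩ : ∃ d, d = 1 - h22 * g11 := ⟨_, rfl⟩
  rw [← hd] at hne ⊢
  set v : ℂ := (h21 * a + h22 * g12 * b) / d with hv
  set u : ℂ := g11 * v + g12 * b with hu
  have h1 := hH a u
  have h2 := hG v b
  have e1 : h21 * a + h22 * u = v := by
    rw [hu, hv]; field_simp; rw [hd]; ring
  have e2 : (h11 + h12 * g11 * h21 / d) * a + (h12 * g12 / d) * b
      = h11 * a + h12 * u := by
    rw [hu, hv]; field_simp; rw [hd]; ring
  have e3 : (g21 * h21 / d) * a + (g22 + g21 * h22 * g12 / d) * b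
      = g21 * v + g22 * b := by
    rw [hv]; field_simp; ring
  rw [e2, e3]
  rw [e1] at h1
  rw [← hu] at h2
  linarith

lemma star_lft {h11 h12 h21 h22 g11 g12 g21 g22 ζ : ℂ}
    (hne : 1 - h22 * g11 ≠ 0) (hζ : 1 - g22 * ζ ≠ 0)
    (h3 : 1 - h22 * (g11 + g12 * ζ * g21 / (1 - g22 * ζ)) ≠ 0) :
    1 - (g22 + g21 * h22 * g12 / (1 - h22 * g11)) * ζ ≠ 0 ∧
    h11 + h12 * (g11 + g12 * ζ * g21 / (1 - g22 * ζ)) * h21 /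
      (1 - h22 * (g11 + g12 * ζ * g21 / (1 - g22 * ζ))) =
    (h11 + h12 * g11 * h21 / (1 - h22 * g11)) +
      (h12 * g12 / (1 - h22 * g11)) * ζ * (g21 * h21 / (1 - h22 * g11)) /
        (1 - (g22 + g21 * h22 * g12 / (1 - h22 * g11)) * ζ) := by
  obtain ⟨d, hd⟩ : ∃ d, d = 1 - h22 * g11 := ⟨_, rfl⟩
  obtain ⟨e, he⟩ : ∃ e, e = 1 - g22 * ζ := ⟨_, rfl⟩
  rw [← hd] at hne ⊢
  rw [← he] at hζ h3 ⊢
  obtain ⟨D, hD⟩ : ∃ D, D = d * e - h22 * g12 * g21 * ζ := ⟨_, rfl⟩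
  have e1 : 1 - h22 * (g11 + g12 * ζ * g21 / e) = D / e := by
    rw [hD]; field_simp; rw [hd]; ring
  have e2 : 1 - (g22 + g21 * h22 * g12 / d) * ζ = D / d := by
    rw [hD]; field_simp; rw [he]; ring
  have hD0 : D ≠ 0 := by
    intro h; rw [e1, h, zero_div] at h3; exact h3 rfl
  refine ⟨by rw [e2]; exact div_ne_zero hD0 hne, ?_⟩
  rw [e1, e2]
  field_simp
  rw [hD, hd, he]
  ring

lemma pick_alg {l0 L0 w0 W0 li Lj wi Wj : ℂ} (a1 : li - l0 ≠ 0) (a2 : Lj - L0 ≠ 0)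
    (b1 : 1 - li * Lj ≠ 0) (b2 : 1 - li * L0 ≠ 0) (b3 : 1 - l0 * Lj ≠ 0) (b4 : 1 - l0 * L0 ≠ 0)
    (c1 : 1 - wi * W0 ≠ 0) (c2 : 1 - w0 * Wj ≠ 0) (c4 : 1 - w0 * W0 ≠ 0) :
    (1 - ((wi - w0) / (1 - wi * W0) / ((li - l0) / (1 - li * L0))) *
        ((Wj - W0) / (1 - w0 * Wj) / ((Lj - L0) / (1 - l0 * Lj)))) / (1 - li * Lj) =
    (1 - w0 * W0) * (((1 - li * L0) / ((li - l0) * (1 - wi * W0))) *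
      ((1 - l0 * Lj) / ((Lj - L0) * (1 - w0 * Wj))) *
      ((1 - wi * Wj) / (1 - li * Lj) - (1 - wi * W0) / (1 - li * L0) *
        ((1 - w0 * Wj) / (1 - l0 * Lj)) / ((1 - w0 * W0) / (1 - l0 * L0)))) := by
  obtain ⟨x1, h1⟩ : ∃ d, d = li - l0 := ⟨_, rfl⟩
  obtain ⟨x2, h2⟩ : ∃ d, d = Lj - L0 := ⟨_, rfl⟩
  obtain ⟨x3, h3⟩ : ∃ d, d = 1 - li * Lj := ⟨_, rfl⟩
  obtain ⟨x4, h4⟩ : ∃ d, d = 1 - li * L0 := ⟨_, rfl⟩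
  obtain ⟨x5, h5⟩ : ∃ d, d = 1 - l0 * Lj := ⟨_, rfl⟩
  obtain ⟨x6, h6⟩ : ∃ d, d = 1 - l0 * L0 := ⟨_, rfl⟩
  obtain ⟨x7, h7⟩ : ∃ d, d = 1 - wi * W0 := ⟨_, rfl⟩
  obtain ⟨x8, h8⟩ : ∃ d, d = 1 - w0 * Wj := ⟨_, rfl⟩
  obtain ⟨x9, h9⟩ : ∃ d, d = 1 - w0 * W0 := ⟨_, rfl⟩
  rw [← h1, ← h2, ← h3, ← h4, ← h5, ← h6, ← h7, ← h8, ← h9]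
  rw [← h1] at a1
  rw [← h2] at a2
  rw [← h3] at b1
  rw [← h4] at b2
  rw [← h5] at b3
  rw [← h6] at b4
  rw [← h7] at c1
  rw [← h8] at c2
  rw [← h9] at c4
  field_simp
  rw [h1, h2, h3, h4, h5, h6, h7, h8, h9]
  ring

/-- The Pick matrix of the reduced data is positive definite. -/
lemma pick_step {N : ℕ} (lam w : Fin (N + 1) → ℂ)
    (hlam : ∀ i, ‖lam i‖ < 1) (hw : ∀ i, ‖w i‖ < 1) (hdist : Function.Injective lam)
    (hPick : (Matrix.of fun i j : Fin (N + 1) =>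
      (1 - w i * conj (w j)) / (1 - lam i * conj (lam j))).PosDef) :
    (Matrix.of fun i j : Fin N =>
      (1 - (mob (w 0) (w i.succ) / mob (lam 0) (lam i.succ)) *
          conj (mob (w 0) (w j.succ) / mob (lam 0) (lam j.succ))) /
        (1 - lam i.succ * conj (lam j.succ))).PosDef := by
  set P := (Matrix.of fun i j : Fin (N + 1) =>
      (1 - w i * conj (w j)) / (1 - lam i * conj (lam j))) with hP
  have hsub : ∀ i : Fin N, lam i.succ - lam 0 ≠ 0 := fun i h =>
    (Fin.succ_ne_zero i) (hdist (sub_eq_zero.mp h))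
  have hd : ∀ i j, 1 - lam i * conj (lam j) ≠ 0 := fun i j => by
    rw [mul_comm]; exact den_ne (hlam j) (hlam i).le
  have hc : ∀ i j, 1 - w i * conj (w j) ≠ 0 := fun i j => by
    rw [mul_comm]; exact den_ne (hw j) (hw i).le
  let α : Fin N → ℂ := fun i =>
    (1 - lam i.succ * conj (lam 0)) / ((lam i.succ - lam 0) * (1 - w i.succ * conj (w 0)))
  have hα : ∀ i, α i ≠ 0 := fun i => div_ne_zero (hd _ _) (mul_ne_zero (hsub i) (hc _ _))
  let B : Matrix (Fin N) (Fin (N + 1)) ℂ := Matrix.of fun i =>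
    Fin.cons (-(α i * (P i.succ 0 / P 0 0))) (fun j => if i = j then α i else 0)
  have hB : Function.Injective B.vecMul := by
    intro x y hxy
    funext j
    have := congrFun hxy j.succ
    simp [B, Matrix.vecMul, dotProduct, Fin.cons_succ] at this
    exact this.resolve_right (hα j)
  have h1 := hPick.mul_mul_conjTranspose_same hB
  have hpos : (0 : ℂ) < ((1 - ‖w 0‖ ^ 2 : ℝ) : ℂ) := by
    rw [Complex.zero_lt_real]
    nlinarith [hw 0, norm_nonneg (w 0)]
  have h2 := h1.smul hpos
  convert h2 using 1
  ext i j
  have hr : ((1 - ‖w 0‖ ^ 2 : ℝ) : ℂ) = 1 - w 0 * conj (w 0) := by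
    rw [Complex.mul_conj, Complex.normSq_eq_norm_sq]; push_cast; ring
  have a1 := hsub i
  have a2 := hsub j
  have a2' : conj (lam j.succ) - conj (lam 0) ≠ 0 := by
    rw [← map_sub]; exact (map_ne_zero _).mpr a2
  have b1 := hd i.succ j.succ
  have b2 := hd i.succ 0
  have b3 := hd 0 j.succ
  have b4 := hd 0 0
  have c1 := hc i.succ 0
  have c2 := hc 0 j.succ
  have c4 := hc 0 0
  have b2' : 1 - conj (lam 0) * lam i.succ ≠ 0 := by rwa [mul_comm]
  have c2' : 1 - conj (w 0) * w i.succ ≠ 0 := by rwa [mul_comm]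
  rw [Matrix.smul_apply, hr, smul_eq_mul, Matrix.mul_apply, Fin.sum_univ_succ]
  simp only [Matrix.mul_apply, Matrix.conjTranspose_apply, Fin.sum_univ_succ, B, Matrix.of_apply,
    Fin.cons_zero, Fin.cons_succ]
  simp only [star_neg, star_mul', Fin.cons_zero, Fin.cons_succ, RCLike.star_def, apply_ite conj, map_zero,
    ite_mul, mul_ite, zero_mul, mul_zero, add_mul, Finset.sum_add_distrib, Finset.sum_ite_eq,
    Finset.mem_univ, if_true]
  have key := pick_alg a1 a2' b1 b2 b3 b4 c1 c2 c4 (wi := w i.succ) (Wj := conj (w j.succ))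
  have p1 : conj (P j.succ 0) = P 0 j.succ := by
    simp only [hP, Matrix.of_apply, map_div₀, map_sub, map_one, map_mul, Complex.conj_conj]
    rw [mul_comm (conj _), mul_comm (conj _)]
  have p0 : conj (P 0 0) = P 0 0 := by
    simp only [hP, Matrix.of_apply, map_div₀, map_sub, map_one, map_mul, Complex.conj_conj]
    rw [mul_comm (conj _), mul_comm (conj _)]
  have p00 : P 0 0 ≠ 0 := div_ne_zero c4 b4
  have hαj : conj (α j) = (1 - lam 0 * conj (lam j.succ)) /
      ((conj (lam j.succ) - conj (lam 0)) * (1 - w 0 * conj (w j.succ))) := by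
    simp only [α, map_div₀, map_sub, map_one, map_mul, Complex.conj_conj]
    rw [mul_comm (conj _) (lam 0), mul_comm (conj _) (w 0)]
  have hl : (1 - (mob (w 0) (w i.succ) / mob (lam 0) (lam i.succ)) *
          conj (mob (w 0) (w j.succ) / mob (lam 0) (lam j.succ))) /
        (1 - lam i.succ * conj (lam j.succ)) = (1 - w 0 * conj (w 0)) *
      (α i * conj (α j) * (P i.succ j.succ - P i.succ 0 * P 0 j.succ / P 0 0)) := by
    rw [hαj]
    refine Eq.trans ?_ key
    simp only [mob, map_div₀, map_sub, map_one, map_mul, Complex.conj_conj]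
    rw [mul_comm (conj (lam 0)), mul_comm (conj (w 0))]
  rw [hl, map_div₀ conj (P j.succ 0) (P 0 0), p1, p0]
  field_simp
  ring

lemma main {N : ℕ} : ∀ (lam : Fin N → ℂ) (w : Fin N → ℂ)
    (_ : ∀ i, lam i ∈ ball (0 : ℂ) 1) (_ : Function.Injective lam)
    (_ : (Matrix.of fun i j : Fin N =>
      (1 - w i * conj (w j)) / (1 - lam i * conj (lam j))).PosDef),
    ∃ G₁₁ G₁₂ G₂₁ G₂₂ : ℂ → ℂ,
      DifferentiableOn ℂ G₁₁ (ball (0 : ℂ) 1) ∧ DifferentiableOn ℂ G₁₂ (ball (0 : ℂ) 1) ∧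
      DifferentiableOn ℂ G₂₁ (ball (0 : ℂ) 1) ∧ DifferentiableOn ℂ G₂₂ (ball (0 : ℂ) 1) ∧
      (∀ z ∈ ball (0 : ℂ) 1, ∀ a b : ℂ,
        ‖G₁₁ z * a + G₁₂ z * b‖ ^ 2 + ‖G₂₁ z * a + G₂₂ z * b‖ ^ 2 ≤ ‖a‖ ^ 2 + ‖b‖ ^ 2) ∧
      (∀ z ∈ ball (0 : ℂ) 1, ∀ ζ : ℂ, ‖ζ‖ ≤ 1 → 1 - G₂₂ z * ζ ≠ 0) ∧
      ∀ φ : ℂ → ℂ,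
        (DifferentiableOn ℂ φ (ball (0 : ℂ) 1) ∧ (∀ z ∈ ball (0 : ℂ) 1, ‖φ z‖ ≤ 1) ∧
          ∀ i, φ (lam i) = w i) ↔
        (∃ ψ : ℂ → ℂ, DifferentiableOn ℂ ψ (ball (0 : ℂ) 1) ∧
          (∀ z ∈ ball (0 : ℂ) 1, ‖ψ z‖ ≤ 1) ∧
          ∀ z ∈ ball (0 : ℂ) 1,
            φ z = G₁₁ z + G₁₂ z * ψ z * G₂₁ z / (1 - G₂₂ z * ψ z)) := by
  induction N with
  | zero =>
    intro lam w _ _ _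
    refine ⟨fun _ => 0, fun _ => 1, fun _ => 1, fun _ => 0, by fun_prop, by fun_prop,
      by fun_prop, by fun_prop, ?_, ?_, ?_⟩
    · intro z _ a b
      simp [add_comm]
    · intro z _ ζ _
      simp
    · intro φ
      constructor
      · rintro ⟨h1, h2, -⟩
        exact ⟨φ, h1, h2, fun z _ => by simp⟩
      · rintro ⟨ψ, h1, h2, h3⟩
        have h3' : ∀ z ∈ ball (0 : ℂ) 1, φ z = ψ z := fun z hz => by simpa using h3 z hz
        exact ⟨h1.congr h3', fun z hz => by rw [h3' z hz]; exact h2 z hz, fun i => i.elim0⟩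
  | succ N ih =>
    intro lam w hlam' hdist hPick
    have hlam : ∀ i, ‖lam i‖ < 1 := fun i => mem_ball_zero_iff.mp (hlam' i)
    have hw : ∀ i, ‖w i‖ < 1 := by
      intro i
      have h := hPick.diag_pos (i := i)
      simp only [Matrix.of_apply, Complex.mul_conj, Complex.normSq_eq_norm_sq] at h
      have h' : (0 : ℂ) < (((1 - ‖w i‖ ^ 2) / (1 - ‖lam i‖ ^ 2) : ℝ) : ℂ) := by
        push_cast; push_cast at h; exact h
      rw [Complex.zero_lt_real] at h'
      have h2 : 0 < 1 - ‖lam i‖ ^ 2 := by nlinarith [hlam i, norm_nonneg (lam i)]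
      have h3 := (div_pos_iff_of_pos_right h2).mp h'
      nlinarith [norm_nonneg (w i)]
    have hstep := pick_step lam w hlam hw hdist hPick
    obtain ⟨G11, G12, G21, G22, d11, d12, d21, d22, hG, hGne, hpar⟩ :=
      ih (fun i => lam i.succ) (fun i => mob (w 0) (w i.succ) / mob (lam 0) (lam i.succ))
        (fun i => hlam' _) (hdist.comp (Fin.succ_injective N)) hstep
    clear ih hstep hPick
    set b : ℂ → ℂ := mob (lam 0) with hb
    have hbd : DifferentiableOn ℂ b (ball 0 1) := mob_diff (hlam 0)
    have hb1 : ∀ z ∈ ball (0 : ℂ) 1, ‖b z‖ < 1 := fun z hz =>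
      mob_lt (hlam 0) (mem_ball_zero_iff.mp hz)
    have hw0 : ‖-w 0‖ < 1 := by simpa using hw 0
    have hs0 : 0 ≤ 1 - ‖w 0‖ ^ 2 := by nlinarith [hw 0, norm_nonneg (w 0)]
    obtain ⟨s, hs⟩ : ∃ s : ℝ, s ^ 2 = 1 - ‖w 0‖ ^ 2 := ⟨_, Real.sq_sqrt hs0⟩
    have hsc : (s : ℂ) * s = 1 - conj (w 0) * w 0 := by
      rw [mul_comm (conj _), Complex.mul_conj, Complex.normSq_eq_norm_sq]
      rw [← sq]
      exact_mod_cast hs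
    let H12 : ℂ → ℂ := fun z => s * b z
    let H22 : ℂ → ℂ := fun z => -conj (w 0) * b z
    have hH : ∀ z ∈ ball (0 : ℂ) 1, ∀ a c : ℂ,
        ‖w 0 * a + H12 z * c‖ ^ 2 + ‖s * a + H22 z * c‖ ^ 2 ≤ ‖a‖ ^ 2 + ‖c‖ ^ 2 := by
      intro z hz a c
      have := unitary_id hs a (b z * c)
      simp only [H12, H22]
      rw [mul_assoc, mul_assoc, this, norm_mul]
      have h1 : ‖b z‖ * ‖c‖ ≤ ‖c‖ := mul_le_of_le_one_left (norm_nonneg _) (hb1 z hz).le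
      have h2 := pow_le_pow_left₀ (by positivity) h1 2
      linarith
    have hHne : ∀ z ∈ ball (0 : ℂ) 1, ∀ ζ : ℂ, ‖ζ‖ ≤ 1 → 1 - H22 z * ζ ≠ 0 := by
      intro z hz ζ hζ
      have h : ‖b z * ζ‖ ≤ 1 := by
        rw [norm_mul]; exact mul_le_one₀ (hb1 z hz).le (norm_nonneg _) hζ
      have := den_ne hw0 h
      simpa [H22, mul_assoc] using this
    -- one Schur step written as a linear fractional transformation
    have hHmob : ∀ z ∈ ball (0 : ℂ) 1, ∀ ζ : ℂ, ‖ζ‖ ≤ 1 →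
        w 0 + H12 z * ζ * s / (1 - H22 z * ζ) = mob (-w 0) (b z * ζ) := by
      intro z hz ζ hζ
      have h := hHne z hz ζ hζ
      have e : mob (-w 0) (b z * ζ) = (b z * ζ + w 0) / (1 - H22 z * ζ) := by
        simp only [mob, H22, map_neg, sub_neg_eq_add]
        ring
      rw [e, eq_div_iff h, add_mul, div_mul_cancel₀ _ h]
      simp only [H12, H22]
      linear_combination (b z * ζ) * hsc
    have hG11 : ∀ z ∈ ball (0 : ℂ) 1, ‖G11 z‖ ≤ 1 := by
      intro z hz
      simpa using lft_bound (hG z hz) (ζ := 0) (by simp) (by simp)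
    have hne : ∀ z ∈ ball (0 : ℂ) 1, 1 - H22 z * G11 z ≠ 0 := fun z hz =>
      hHne z hz _ (hG11 z hz)
    have hstar : ∀ z ∈ ball (0 : ℂ) 1, ∀ ζ : ℂ, ‖ζ‖ ≤ 1 → _ := fun z hz ζ hζ =>
      star_lft (h11 := w 0) (h12 := H12 z) (h21 := s) (hne z hz) (hGne z hz ζ hζ)
        (hHne z hz _ (lft_bound (hG z hz) hζ (hGne z hz ζ hζ)))
    have dH12 : DifferentiableOn ℂ H12 (ball 0 1) := hbd.const_mul _
    have dH22 : DifferentiableOn ℂ H22 (ball 0 1) := hbd.const_mul _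
    have dD : DifferentiableOn ℂ (fun z => 1 - H22 z * G11 z) (ball 0 1) :=
      (differentiableOn_const _).sub (dH22.mul d11)
    have hbi : ∀ i : Fin N, b (lam i.succ) ≠ 0 := by
      intro i
      apply div_ne_zero
      · exact fun h => (Fin.succ_ne_zero i) (hdist (sub_eq_zero.mp h))
      · exact den_ne (hlam 0) (hlam _).le
    refine ⟨fun z => w 0 + H12 z * G11 z * s / (1 - H22 z * G11 z),
      fun z => H12 z * G12 z / (1 - H22 z * G11 z),
      fun z => G21 z * s / (1 - H22 z * G11 z),
      fun z => G22 z + G21 z * H22 z * G12 z / (1 - H22 z * G11 z), ?_, ?_, ?_, ?_, ?_, ?_, ?_⟩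
    · exact (differentiableOn_const _).add (((dH12.mul d11).mul_const _).div dD hne)
    · exact (dH12.mul d12).div dD hne
    · exact (d21.mul_const _).div dD hne
    · exact d22.add (((d21.mul dH22).mul d12).div dD hne)
    · intro z hz a c
      exact star_contr (hH z hz) (hG z hz) (hne z hz) a c
    · intro z hz ζ hζ
      exact (hstar z hz ζ hζ).1
    · intro φ
      constructor
      · rintro ⟨hφd, hφ1, hφw⟩
        have hfd : DifferentiableOn ℂ (fun z => mob (w 0) (φ z)) (ball 0 1) := by
          unfold mob
          exact (hφd.sub_const _).div ((differentiableOn_const _).sub (hφd.const_mul _))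
            (fun z hz => den_ne (hw 0) (hφ1 z hz))
        obtain ⟨g, hgd, hg1, hgf⟩ := schwarz_factor (hlam 0) hfd
          (fun z hz => mob_le (hw 0) (hφ1 z hz)) (by simp [hφw, mob])
        obtain ⟨ψ, hψd, hψ1, hψ⟩ := (hpar g).mp ⟨hgd, hg1, fun i => by
          have := hgf _ (hlam' i.succ)
          simp only [hφw] at this
          rw [this, ← hb, mul_div_cancel_left₀ _ (hbi i)]⟩
        refine ⟨ψ, hψd, hψ1, fun z hz => ?_⟩
        refine Eq.trans ?_ (hstar z hz _ (hψ1 z hz)).2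
        rw [← hψ z hz, hHmob z hz _ (hg1 z hz), hb, ← hgf z hz, mob_inv (hw 0) (hφ1 z hz)]
      · rintro ⟨ψ, hψd, hψ1, hψ⟩
        obtain ⟨hgd, hg1, hgw⟩ := (hpar (fun z => G11 z + G12 z * ψ z * G21 z /
          (1 - G22 z * ψ z))).mpr ⟨ψ, hψd, hψ1, fun z _ => rfl⟩
        set g : ℂ → ℂ := fun z => G11 z + G12 z * ψ z * G21 z / (1 - G22 z * ψ z) with hgdef
        have hφ : ∀ z ∈ ball (0 : ℂ) 1, φ z = w 0 + H12 z * g z * s / (1 - H22 z * g z) :=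
          fun z hz => (hψ z hz).trans (hstar z hz _ (hψ1 z hz)).2.symm
        have hφ2 : ∀ z ∈ ball (0 : ℂ) 1, φ z = mob (-w 0) (b z * g z) :=
          fun z hz => (hφ z hz).trans (hHmob z hz _ (hg1 z hz))
        refine ⟨?_, ?_, ?_⟩
        · refine DifferentiableOn.congr ?_ hφ
          exact (differentiableOn_const _).add (((dH12.mul hgd).mul_const _).div
            ((differentiableOn_const _).sub (dH22.mul hgd))
            (fun z hz => hHne z hz _ (hg1 z hz)))
        · intro z hz
          rw [hφ z hz]
          exact lft_bound (hH z hz) (hg1 z hz) (hHne z hz _ (hg1 z hz))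
        · intro i
          rw [hφ2 _ (hlam' i)]
          refine Fin.cases ?_ (fun i => ?_) i
          · simp [hb, mob]
          · have hgi : g (lam i.succ) = mob (w 0) (w i.succ) / b (lam i.succ) := hgw i
            rw [hgi, mul_div_cancel₀ _ (hbi i)]
            exact mob_inv (hw 0) (hw _).le

end NevAux

/-- **Nevanlinna's parametrization of all solutions of a non-degenerate Pick problem.**
If the Pick matrix of the data `(λᵢ, wᵢ)` is positive definite, then there are analytic
functions `G₁₁, G₁₂, G₂₁, G₂₂` on `𝔻` such that the matrix `G(λ)` has operator norm at
most `1` on `𝔻` (expressed via its quadratic form on Euclidean `ℂ²`), and the solutions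
`φ` of the Pick problem are exactly the functions
`G₁₁ + G₁₂ ψ G₂₁ / (1 - G₂₂ ψ)` with `ψ` analytic on `𝔻`, `sup_𝔻 |ψ| ≤ 1`. -/
theorem nevanlinna_parametrization {N : ℕ} (lam : Fin N → ℂ) (w : Fin N → ℂ)
    (hlam : ∀ i, lam i ∈ ball (0 : ℂ) 1) (hdist : Function.Injective lam)
    (hPick : (Matrix.of fun i j : Fin N =>
      (1 - w i * starRingEnd ℂ (w j)) / (1 - lam i * starRingEnd ℂ (lam j))).PosDef) :
    ∃ G₁₁ G₁₂ G₂₁ G₂₂ : ℂ → ℂ,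
      DifferentiableOn ℂ G₁₁ (ball (0 : ℂ) 1) ∧ DifferentiableOn ℂ G₁₂ (ball (0 : ℂ) 1) ∧
      DifferentiableOn ℂ G₂₁ (ball (0 : ℂ) 1) ∧ DifferentiableOn ℂ G₂₂ (ball (0 : ℂ) 1) ∧
      -- the 2×2 matrix `G(λ)` is contractive for each `λ ∈ 𝔻`
      (∀ lam' ∈ ball (0 : ℂ) 1, ∀ a b : ℂ,
        ‖G₁₁ lam' * a + G₁₂ lam' * b‖ ^ 2 + ‖G₂₁ lam' * a + G₂₂ lam' * b‖ ^ 2 ≤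
          ‖a‖ ^ 2 + ‖b‖ ^ 2) ∧
      ∀ φ : ℂ → ℂ,
        (DifferentiableOn ℂ φ (ball (0 : ℂ) 1) ∧ (∀ z ∈ ball (0 : ℂ) 1, ‖φ z‖ ≤ 1) ∧
          ∀ i, φ (lam i) = w i) ↔
        (∃ ψ : ℂ → ℂ, DifferentiableOn ℂ ψ (ball (0 : ℂ) 1) ∧
          (∀ z ∈ ball (0 : ℂ) 1, ‖ψ z‖ ≤ 1) ∧
          (∀ z ∈ ball (0 : ℂ) 1, 1 - G₂₂ z * ψ z ≠ 0) ∧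
          ∀ z ∈ ball (0 : ℂ) 1,
            φ z = G₁₁ z + G₁₂ z * ψ z * G₂₁ z / (1 - G₂₂ z * ψ z)) := by
  obtain ⟨G11, G12, G21, G22, d11, d12, d21, d22, hG, hne, hpar⟩ :=
    NevAux.main lam w hlam hdist hPick
  refine ⟨G11, G12, G21, G22, d11, d12, d21, d22, hG, fun φ => (hpar φ).trans ?_⟩
  constructor
  · rintro ⟨ψ, h1, h2, h3⟩
    exact ⟨ψ, h1, h2, fun z hz => hne z hz _ (h2 z hz), h3⟩
  · rintro ⟨ψ, h1, h2, -, h3⟩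
    exact ⟨ψ, h1, h2, h3⟩
end

section
/- (Takagi) Let λ₁,…,λ_N be distinct points of 𝔻 and w₁,…,w_N ∈ ℂ, and suppose the Pick matrix with (i,j) entry (1 − w_i w̄_j)/(1 − λ_i λ̄_j) is invertible (in particular Hermitian) with π positive eigenvalues and ν negative eigenvalues. Then there exist a Blaschke product f of degree π and a Blaschke product g of degree ν such that g(λ_i) ≠ 0 and f(λ_i)/g(λ_i) = w_i for every i = 1,…,N; in particular the meromorphic function φ = f/g interpolates the data and has modulus one everywhere on the unit circle where it is defined. -/
open Metric Matrix Finset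

/-- A Blaschke product of degree `n`: `B(z) = c ∏_{k=1}^n (z - aₖ)/(1 - āₖ z)` with
`|c| = 1` and zeros `aₖ` (for degree `0` this is the unimodular constant `c`). -/
noncomputable def blaschkeProd {n : ℕ} (c : ℂ) (a : Fin n → ℂ) (z : ℂ) : ℂ :=
  c * ∏ k, (z - a k) / (1 - starRingEnd ℂ (a k) * z)

lemma tk_circle_infinite : {z : ℂ | ‖z‖ = 1}.Infinite := by
  have h : IsPreconnected (Metric.sphere (0 : ℂ) 1) :=
    isPreconnected_sphere (by rw [Complex.rank_real_complex]; norm_num) 0 1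
  have h2 : (Metric.sphere (0 : ℂ) 1).Nontrivial :=
    ⟨1, by simp, -1, by simp, by norm_num⟩
  have := h.infinite_of_nontrivial h2
  convert this using 1
  ext z; simp

open Polynomial in
noncomputable def tkRev (N : ℕ) (p : ℂ[X]) : ℂ[X] := (p.map (starRingEnd ℂ)).reflect N

section
open Polynomial

lemma tkRev_rev (N : ℕ) (p : ℂ[X]) : tkRev N (tkRev N p) = p := by
  unfold tkRev
  ext n
  simp [Polynomial.coeff_reflect]

lemma tkRev_natDegree (N : ℕ) (p : ℂ[X]) (hp : p.natDegree ≤ N) : (tkRev N p).natDegree ≤ N := by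
  rw [Polynomial.natDegree_le_iff_coeff_eq_zero]
  intro n hn
  unfold tkRev
  rw [Polynomial.coeff_reflect, Polynomial.revAt_eq_self_of_lt hn, Polynomial.coeff_map,
    Polynomial.coeff_eq_zero_of_natDegree_lt (by omega)]
  simp

lemma tkRev_lin (N : ℕ) (p : ℂ[X]) (hp : p.natDegree ≤ N) (r : ℂ) :
    tkRev (N + 1) ((X - C r) * p) = (1 - C (starRingEnd ℂ r) * X) * tkRev N p := by
  unfold tkRev
  rw [Polynomial.map_mul, add_comm N 1, Polynomial.reflect_mul _ _ (F := 1) (G := N)]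
  · congr 1
    simp [Polynomial.reflect_sub, Polynomial.reflect_C]
  · exact (Polynomial.natDegree_map_le).trans (by simp)
  · exact (Polynomial.natDegree_map_le).trans hp

lemma tkRev_lin' (N : ℕ) (p : ℂ[X]) (hp : p.natDegree ≤ N) (r : ℂ) :
    tkRev (N + 1) ((1 - C (starRingEnd ℂ r) * X) * p) = (X - C r) * tkRev N p := by
  have := tkRev_lin N (tkRev N p) (tkRev_natDegree N p hp) r
  rw [tkRev_rev] at this
  rw [← this, tkRev_rev]

lemma tkRev_succ (N : ℕ) (p : ℂ[X]) (hp : p.natDegree ≤ N) :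
    tkRev (N + 1) p = X * tkRev N p := by
  simpa using tkRev_lin' N p hp 0

lemma tkRev_eval (N : ℕ) (p : ℂ[X]) (hp : p.natDegree ≤ N) (z : ℂ) (hz : ‖z‖ = 1) :
    (tkRev N p).eval z = z ^ N * starRingEnd ℂ (p.eval z) := by
  have hz0 : z ≠ 0 := by rintro rfl; simp at hz
  have hinv : z⁻¹ = starRingEnd ℂ z := by
    rw [Complex.inv_def, Complex.normSq_eq_norm_sq, hz]; simp
  have : Invertible z⁻¹ := invertibleOfNonzero (inv_ne_zero hz0)
  have := Polynomial.eval₂_reflect_mul_pow (RingHom.id ℂ) z⁻¹ N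
    (p.map (starRingEnd ℂ)) (Polynomial.natDegree_map_le.trans hp)
  rw [invOf_eq_inv, inv_inv, hinv, Polynomial.eval₂_id, Polynomial.eval₂_id,
    Polynomial.eval_map_apply] at this
  unfold tkRev
  rw [← this, ← hinv, mul_comm, mul_assoc, ← mul_pow, inv_mul_cancel₀ hz0, one_pow, mul_one]

lemma tkRev_ident (N : ℕ) (p q : ℂ[X]) (hp : p.natDegree ≤ N) (hq : q.natDegree ≤ N)
    (h : ∀ z : ℂ, ‖z‖ = 1 → ‖p.eval z‖ = ‖q.eval z‖) : p * tkRev N p = q * tkRev N q := by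
  apply Polynomial.eq_of_infinite_eval_eq
  refine tk_circle_infinite.mono ?_
  intro z hz
  simp only [Set.mem_ofPred_eq] at hz ⊢
  rw [eval_mul, eval_mul, tkRev_eval N p hp z hz, tkRev_eval N q hq z hz]
  have h1 := Complex.mul_conj' (p.eval z)
  have h2 := Complex.mul_conj' (q.eval z)
  rw [h z hz] at h1
  linear_combination z^N * (h1 - h2)
end

lemma tk_bp_cons {n : ℕ} (c r : ℂ) (A : Fin n → ℂ) (z : ℂ) :
    blaschkeProd c (Fin.cons r A : Fin (n + 1) → ℂ) z =
      (z - r) / (1 - starRingEnd ℂ r * z) * blaschkeProd c A z := by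
  unfold blaschkeProd
  rw [Fin.prod_univ_succ]
  simp only [Fin.cons_zero, Fin.cons_succ]
  ring

lemma tk_bp_const {n : ℕ} (c d : ℂ) (A : Fin n → ℂ) (z : ℂ) :
    blaschkeProd (d * c) A z = d * blaschkeProd c A z := by
  unfold blaschkeProd
  ring

lemma tk_den_ne (x y : ℂ) (hx : ‖x‖ ≤ 1) (hy : ‖y‖ < 1) : 1 - x * y ≠ 0 := by
  intro h
  have h1 : x * y = 1 := by linear_combination -h
  have h2 : ‖x‖ * ‖y‖ = 1 := by rw [← norm_mul, h1]; simp
  nlinarith [norm_nonneg x, norm_nonneg y]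

lemma tk_conj_norm (z : ℂ) : ‖starRingEnd ℂ z‖ = ‖z‖ := by simp

open Polynomial in
/-- the output of the factorization -/
def tkGood (N : ℕ) (p q : ℂ[X]) : Prop :=
  ∃ (m n : ℕ) (c : ℂ) (A : Fin m → ℂ) (B : Fin n → ℂ), m + n ≤ N ∧ ‖c‖ = 1 ∧
    (∀ k, ‖A k‖ < 1) ∧ (∀ k, ‖B k‖ < 1) ∧
    (∀ z : ℂ, ‖z‖ < 1 → p.eval z * blaschkeProd 1 B z = q.eval z * blaschkeProd c A z) ∧
    (∀ z : ℂ, ‖z‖ < 1 → blaschkeProd c A z = 0 → blaschkeProd 1 B z = 0 → False)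

section
open Polynomial

lemma tk_good_lin (N : ℕ) (p q : ℂ[X]) (r : ℂ) (h : tkGood N p q)
    (hcop : ∀ z, ((X - C r) * p).eval z = 0 → ((1 - C (starRingEnd ℂ r) * X) * q).eval z = 0 → False) :
    tkGood (N + 1) ((X - C r) * p) ((1 - C (starRingEnd ℂ r) * X) * q) := by
  obtain ⟨m, n, c, A, B, hmn, hc, hA, hB, h1, h2⟩ := h
  rcases lt_trichotomy ‖r‖ 1 with hr | hr | hr
  · refine ⟨m + 1, n, c, Fin.cons r A, B, by omega, hc, ?_, hB, ?_, ?_⟩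
    · intro k
      refine Fin.cases ?_ ?_ k <;> simp [hr, hA]
    · intro z hz
      have hd := tk_den_ne (starRingEnd ℂ r) z (by rw [tk_conj_norm]; exact hr.le) hz
      rw [tk_bp_cons]
      simp only [eval_mul, eval_sub, eval_X, eval_C, eval_one]
      generalize starRingEnd ℂ r = s at hd
      have e : (1 - s * z) * ((z - r) / (1 - s * z)) = z - r := mul_div_cancel₀ _ hd
      linear_combination (z - r) * h1 z hz - q.eval z * blaschkeProd c A z * e
    · intro z hz hf hg
      rw [tk_bp_cons] at hf
      have hd := tk_den_ne (starRingEnd ℂ r) z (by rw [tk_conj_norm]; exact hr.le) hz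
      rcases mul_eq_zero.1 hf with hf | hf
      · have hzr : z = r := by
          rcases div_eq_zero_iff.1 hf with hf | hf
          · linear_combination hf
          · exact absurd hf hd
        have := h1 z hz
        rw [hg, mul_zero] at this
        rcases mul_eq_zero.1 this.symm with h3 | h3
        · exact hcop z (by simp [hzr]) (by simp [h3])
        · exact h2 z hz h3 hg
      · exact h2 z hz hf hg
  · -- on the circle: a unimodular constant
    have hrr : r * starRingEnd ℂ r = 1 := by rw [Complex.mul_conj', hr]; simp
    refine ⟨m, n, (-r) * c, A, B, by omega, by rw [norm_mul, norm_neg, hr, hc, one_mul], hA, hB, ?_, ?_⟩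
    · intro z hz
      rw [tk_bp_const]
      simp only [eval_mul, eval_sub, eval_X, eval_C, eval_one]
      linear_combination (z - r) * h1 z hz - z * eval z q * blaschkeProd c A z * hrr
    · intro z hz hf hg
      rw [tk_bp_const] at hf
      have hr0 : -r ≠ 0 := by
        intro h; rw [neg_eq_zero] at h; simp [h] at hr
      exact h2 z hz ((mul_eq_zero.1 hf).resolve_left hr0) hg
  · have hr0 : r ≠ 0 := by rintro rfl; simp at hr; linarith
    have hrc0 : starRingEnd ℂ r ≠ 0 := by simpa using hr0
    have hs : ‖(starRingEnd ℂ r)⁻¹‖ < 1 := by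
      rw [norm_inv, tk_conj_norm]; exact inv_lt_one_of_one_lt₀ hr
    have hss : starRingEnd ℂ ((starRingEnd ℂ r)⁻¹) = r⁻¹ := by simp
    have hnorm : ‖(r * (starRingEnd ℂ r)⁻¹)‖ = 1 := by
      rw [norm_mul, norm_inv, tk_conj_norm]; field_simp
    have hconst0 : (r * (starRingEnd ℂ r)⁻¹) ≠ 0 := by
      intro h; rw [h] at hnorm; simp at hnorm
    refine ⟨m, n + 1, (r * (starRingEnd ℂ r)⁻¹) * c, A,
      Fin.cons ((starRingEnd ℂ r)⁻¹) B, by omega, by rw [norm_mul, hnorm, hc, one_mul], hA, ?_, ?_, ?_⟩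
    · intro k
      refine Fin.cases ?_ ?_ k
      · simpa using hs
      · simpa using hB
    · intro z hz
      have hd := tk_den_ne r⁻¹ z (by rw [← hss, tk_conj_norm]; exact hs.le) hz
      rw [tk_bp_cons, hss, tk_bp_const]
      simp only [eval_mul, eval_sub, eval_X, eval_C, eval_one]
      generalize starRingEnd ℂ r = s at hrc0
      have e1 : (z - r) * ((z - s⁻¹) / (1 - r⁻¹ * z)) = r * s⁻¹ * (1 - s * z) := by
        rw [mul_div_assoc', div_eq_iff hd]
        field_simp
        ring
      linear_combination r * s⁻¹ * (1 - s * z) * h1 z hz + p.eval z * blaschkeProd 1 B z * e1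
    · intro z hz hf hg
      rw [tk_bp_const] at hf
      have hf := (mul_eq_zero.1 hf).resolve_left hconst0
      rw [tk_bp_cons, hss] at hg
      have hd := tk_den_ne r⁻¹ z (by rw [← hss, tk_conj_norm]; exact hs.le) hz
      rcases mul_eq_zero.1 hg with hg | hg
      · have hzr : z = (starRingEnd ℂ r)⁻¹ := by
          rcases div_eq_zero_iff.1 hg with hf | hf
          · linear_combination hf
          · exact absurd hf hd
        have := h1 z hz
        rw [hf, mul_zero] at this
        rcases mul_eq_zero.1 this with h3 | h3
        · exact hcop z (by simp [h3]) (by simp [hzr, hrc0])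
        · exact h2 z hz hf h3
      · exact h2 z hz hf hg

lemma tk_good_X (N : ℕ) (p q : ℂ[X]) (h : tkGood N p q) (hcop : p.eval 0 ≠ 0) :
    tkGood (N + 1) p (X * q) := by
  obtain ⟨m, n, c, A, B, hmn, hc, hA, hB, h1, h2⟩ := h
  refine ⟨m, n + 1, c, A, Fin.cons 0 B, by omega, hc, hA, ?_, ?_, ?_⟩
  · intro k
    refine Fin.cases ?_ ?_ k
    · simp
    · simpa using hB
  · intro z hz
    rw [tk_bp_cons]
    simp only [eval_mul, eval_X, map_zero]
    linear_combination z * h1 z hz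
  · intro z hz hf hg
    rw [tk_bp_cons] at hg
    simp only [map_zero, zero_mul, sub_zero, div_one, mul_eq_zero] at hg
    rcases hg with rfl | hg
    · have := h1 0 hz
      rw [hf, mul_zero] at this
      exact h2 0 hz hf ((mul_eq_zero.1 this).resolve_left hcop)
    · exact h2 z hz hf hg

lemma tk_good_mono (N : ℕ) (p q : ℂ[X]) (h : tkGood N p q) : tkGood (N + 1) p q := by
  obtain ⟨m, n, c, A, B, hmn, h⟩ := h
  exact ⟨m, n, c, A, B, by omega, h⟩

lemma tk_good_common (N : ℕ) (p q d : ℂ[X]) (h : tkGood N p q) : tkGood (N + 1) (d * p) (d * q) := by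
  obtain ⟨m, n, c, A, B, hmn, hc, hA, hB, h1, h2⟩ := h
  refine ⟨m, n, c, A, B, by omega, hc, hA, hB, ?_, h2⟩
  intro z hz
  simp only [eval_mul]
  linear_combination d.eval z * h1 z hz

lemma tk_deg (N : ℕ) (p d : ℂ[X]) (hd : d.natDegree = 1) (hp : p ≠ 0) (h : (d * p).natDegree ≤ N + 1) :
    p.natDegree ≤ N := by
  rw [natDegree_mul (by rintro rfl; simp at hd) hp] at h
  omega

lemma tk_factor (N : ℕ) : ∀ p q : ℂ[X], p.natDegree ≤ N → q.natDegree ≤ N → p ≠ 0 → q ≠ 0 →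
    p * tkRev N p = q * tkRev N q → tkGood N p q := by
  induction N with
  | zero =>
    intro p q hp hq hp0 hq0 h
    obtain ⟨x, rfl⟩ := natDegree_eq_zero.1 (Nat.le_zero.1 hp)
    obtain ⟨y, rfl⟩ := natDegree_eq_zero.1 (Nat.le_zero.1 hq)
    have hx : x ≠ 0 := by rintro rfl; simp at hp0
    have hy : y ≠ 0 := by rintro rfl; simp at hq0
    have h3 : ‖x‖ = ‖y‖ := by
      have := congrArg (fun t => t.eval 1) h
      simp only [eval_mul, tkRev_eval 0 _ hp 1 (by simp), tkRev_eval 0 _ hq 1 (by simp), eval_C,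
        pow_zero, one_mul, Complex.mul_conj'] at this
      have h4 : ‖x‖ ^ 2 = ‖y‖ ^ 2 := by exact_mod_cast this
      exact (pow_left_inj₀ (norm_nonneg _) (norm_nonneg _) two_ne_zero).1 h4
    refine ⟨0, 0, x / y, Fin.elim0, Fin.elim0, by simp, ?_, fun k => k.elim0, fun k => k.elim0, ?_, ?_⟩
    · rw [norm_div, h3, div_self]; simpa using hy
    · intro z _
      simp [blaschkeProd]; field_simp
    · intro z _ _ hg
      simp [blaschkeProd] at hg
  | succ N ih =>
    intro p q hp hq hp0 hq0 h
    by_cases hcop : ∃ z, p.eval z = 0 ∧ q.eval z = 0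
    · obtain ⟨r, hpr, hqr⟩ := hcop
      obtain ⟨p1, rfl⟩ := dvd_iff_isRoot.2 hpr
      obtain ⟨q1, rfl⟩ := dvd_iff_isRoot.2 hqr
      have hp1 := right_ne_zero_of_mul hp0
      have hq1 := right_ne_zero_of_mul hq0
      have dp := tk_deg N p1 _ (natDegree_X_sub_C r) hp1 hp
      have dq := tk_deg N q1 _ (natDegree_X_sub_C r) hq1 hq
      refine tk_good_common N p1 q1 _ (ih p1 q1 dp dq hp1 hq1 ?_)
      rw [tkRev_lin N p1 dp, tkRev_lin N q1 dq] at h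
      have hne : (X - C r) * (1 - C (starRingEnd ℂ r) * X) ≠ (0 : ℂ[X]) := by
        refine mul_ne_zero (X_sub_C_ne_zero r) ?_
        intro h0
        have := congrArg (fun t => t.eval 0) h0
        simp at this
      apply mul_left_cancel₀ hne
      linear_combination h
    · push Not at hcop
      by_cases hroot : ∃ r, p.eval r = 0
      · obtain ⟨r, hpr⟩ := hroot
        have hqr := hcop r hpr
        have hrev : (tkRev (N + 1) q).eval r = 0 := by
          have := congrArg (fun t => t.eval r) h
          simp only [eval_mul, hpr, zero_mul] at this
          exact (mul_eq_zero.1 this.symm).resolve_left hqr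
        obtain ⟨p1, rfl⟩ := dvd_iff_isRoot.2 hpr
        obtain ⟨h1, hh1⟩ := dvd_iff_isRoot.2 hrev
        have hp1 := right_ne_zero_of_mul hp0
        have hrq0 : tkRev (N + 1) q ≠ 0 := by
          intro h0; rw [← tkRev_rev (N+1) q, h0] at hq0; simp [tkRev] at hq0
        have hh0 : h1 ≠ 0 := by rw [hh1] at hrq0; exact right_ne_zero_of_mul hrq0
        have dp := tk_deg N p1 _ (natDegree_X_sub_C r) hp1 hp
        have dh := tk_deg N h1 _ (natDegree_X_sub_C r) hh0 (by rw [← hh1]; exact tkRev_natDegree _ _ hq)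
        have hqe : q = (1 - C (starRingEnd ℂ r) * X) * tkRev N h1 := by
          rw [← tkRev_lin N h1 dh, ← hh1, tkRev_rev]
        have dq1 := tkRev_natDegree N h1 dh
        generalize tkRev N h1 = q1 at hqe dq1
        subst hqe
        have hq1 := right_ne_zero_of_mul hq0
        refine tk_good_lin N p1 q1 r (ih p1 q1 dp dq1 hp1 hq1 ?_) (fun z a b => hcop z a b)
        rw [tkRev_lin N p1 dp, tkRev_lin' N q1 dq1] at h
        have hne : (X - C r) * (1 - C (starRingEnd ℂ r) * X) ≠ (0 : ℂ[X]) :=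
          mul_ne_zero (X_sub_C_ne_zero r) (left_ne_zero_of_mul hq0)
        apply mul_left_cancel₀ hne
        linear_combination h
      · have hdeg : p.natDegree = 0 := by
          by_contra hd
          obtain ⟨r, hr⟩ := Complex.exists_root (natDegree_pos_iff_degree_pos.1 (Nat.pos_of_ne_zero hd))
          exact hroot ⟨r, hr⟩
        have dp : p.natDegree ≤ N := by omega
        rw [tkRev_succ N p dp] at h
        have hX : X ∣ q * tkRev (N + 1) q := ⟨p * tkRev N p, by rw [← h]; ring⟩
        rcases prime_X.dvd_or_dvd hX with hX | hX
        · obtain ⟨q1, rfl⟩ := hX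
          have hq1 := right_ne_zero_of_mul hq0
          have dq := tk_deg N q1 _ natDegree_X hq1 hq
          refine tk_good_X N p q1 (ih p q1 dp dq hp0 hq1 ?_) (fun h0 => hroot ⟨0, h0⟩)
          have e := tkRev_lin N q1 dq 0
          simp only [map_zero, sub_zero, zero_mul, one_mul] at e
          rw [e] at h
          apply mul_left_cancel₀ (X_ne_zero (R := ℂ))
          linear_combination h
        · obtain ⟨h1, hh1⟩ := hX
          have hrq0 : tkRev (N + 1) q ≠ 0 := by
            intro h0; rw [← tkRev_rev (N+1) q, h0] at hq0; simp [tkRev] at hq0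
          have hh0 : h1 ≠ 0 := by rw [hh1] at hrq0; exact right_ne_zero_of_mul hrq0
          have dh := tk_deg N h1 _ natDegree_X hh0 (by rw [← hh1]; exact tkRev_natDegree _ _ hq)
          have e := tkRev_lin N h1 dh 0
          simp only [map_zero, sub_zero, zero_mul, one_mul] at e
          have hqe : q = tkRev N h1 := by
            rw [← e, ← hh1, tkRev_rev]
          have dq : q.natDegree ≤ N := by rw [hqe]; exact tkRev_natDegree N h1 dh
          refine tk_good_mono N p q (ih p q dp dq hp0 hq0 ?_)
          rw [tkRev_succ N q dq] at h
          apply mul_left_cancel₀ (X_ne_zero (R := ℂ))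
          linear_combination h
end

lemma tk_kernel {m : ℕ} (c : ℂ) (hc : ‖c‖ = 1) : ∀ (A : Fin m → ℂ) (_ : ∀ k, ‖A k‖ < 1),
    ∃ E : Fin m → ℂ → ℂ, ∀ z y : ℂ, ‖z‖ < 1 → ‖y‖ < 1 →
      1 - blaschkeProd c A z * starRingEnd ℂ (blaschkeProd c A y) =
        (1 - z * starRingEnd ℂ y) * ∑ k, E k z * starRingEnd ℂ (E k y) := by
  induction m with
  | zero =>
    intro A _
    refine ⟨fun k => k.elim0, ?_⟩
    intro z y _ _
    simp [blaschkeProd, Complex.mul_conj', hc]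
  | succ m ih =>
    intro A hA
    obtain ⟨r, A1, rfl⟩ : ∃ r A1, A = (Fin.cons r A1 : Fin (m + 1) → ℂ) :=
      ⟨A 0, Fin.tail A, (Fin.cons_self_tail A).symm⟩
    have hr : ‖r‖ < 1 := by simpa using hA 0
    obtain ⟨E, hE⟩ := ih A1 (fun k => by simpa using hA k.succ)
    set t : ℝ := Real.sqrt (1 - ‖r‖ ^ 2) with ht
    have htt : (t : ℂ) * t = 1 - r * starRingEnd ℂ r := by
      rw [Complex.mul_conj', ← Complex.ofReal_mul, ht, Real.mul_self_sqrt]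
      · push_cast; rfl
      · nlinarith [norm_nonneg r]
    refine ⟨Fin.cons (fun z => t / (1 - starRingEnd ℂ r * z))
      (fun k z => (z - r) / (1 - starRingEnd ℂ r * z) * E k z), ?_⟩
    intro z y hz hy
    have h1 := tk_den_ne (starRingEnd ℂ r) z (by rw [tk_conj_norm]; exact hr.le) hz
    have h2 := tk_den_ne r (starRingEnd ℂ y) hr.le (by rw [tk_conj_norm]; exact hy)
    rw [Fin.sum_univ_succ]
    simp only [Fin.cons_zero, Fin.cons_succ, tk_bp_cons, map_mul, map_div₀, map_sub, map_one,
      Complex.conj_conj, Complex.conj_ofReal]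
    have h3 := hE z y hz hy
    have h4 : ∑ k, (z - r) / (1 - starRingEnd ℂ r * z) * E k z *
        ((starRingEnd ℂ y - starRingEnd ℂ r) / (1 - r * starRingEnd ℂ y) * starRingEnd ℂ (E k y)) =
        (z - r) / (1 - starRingEnd ℂ r * z) *
        ((starRingEnd ℂ y - starRingEnd ℂ r) / (1 - r * starRingEnd ℂ y)) *
        ∑ k, E k z * starRingEnd ℂ (E k y) := by
      rw [Finset.mul_sum]
      exact Finset.sum_congr rfl fun k _ => by ring
    rw [h4]
    generalize ∑ k, E k z * starRingEnd ℂ (E k y) = S at *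
    generalize starRingEnd ℂ (blaschkeProd c A1 y) = f' at *
    generalize blaschkeProd c A1 z = f at *
    generalize starRingEnd ℂ y = y' at *
    generalize starRingEnd ℂ r = r' at *
    have h5 : 1 - (z - r) / (1 - r' * z) * ((y' - r') / (1 - r * y')) =
      (1 - z * y') * (t / (1 - r' * z) * (t / (1 - r * y'))) := by
      have h6 : 1 - (z - r) / (1 - r' * z) * ((y' - r') / (1 - r * y')) =
          ((1 - r' * z) * (1 - r * y') - (z - r) * (y' - r')) / ((1 - r' * z) * (1 - r * y')) := by
        rw [div_mul_div_comm, sub_div, div_self (mul_ne_zero h1 h2)]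
      rw [h6, div_mul_div_comm, mul_div_assoc']
      congr 1
      linear_combination - (1 - z * y') * htt
    linear_combination h5 + (z - r) / (1 - r' * z) * ((y' - r') / (1 - r * y')) * h3

lemma tk_inertia {N m : ℕ} (A : Matrix (Fin N) (Fin N) ℂ) (hA : A.IsHermitian)
    (U : Matrix (Fin m) (Fin N) ℂ) (σ : ℝ)
    (hU : ∀ x : Fin N → ℂ, U *ᵥ x = 0 → σ * (star x ⬝ᵥ A *ᵥ x).re ≤ 0) :
    (Finset.univ.filter fun i => 0 < σ * hA.eigenvalues i).card ≤ m := by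
  classical
  by_contra hlt
  push Not at hlt
  set S := Finset.univ.filter fun i => 0 < σ * hA.eigenvalues i with hS
  set V : Matrix (Fin N) (Fin N) ℂ := (hA.eigenvectorUnitary : Matrix (Fin N) (Fin N) ℂ) with hV
  let W : Matrix (Fin m) S ℂ := (U * V).submatrix id (fun s => (s : Fin N))
  have hker : LinearMap.ker W.mulVecLin ≠ ⊥ := by
    apply LinearMap.ker_ne_bot_of_finrank_lt
    simpa using hlt
  obtain ⟨t, ht, ht0⟩ := Submodule.exists_mem_ne_zero_of_ne_bot hker
  have ht' : W *ᵥ t = 0 := by simpa using ht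
  let T : Fin N → ℂ := fun i => if h : i ∈ S then t ⟨i, h⟩ else 0
  have hT : ∀ B : Fin N → ℂ, ∑ i, B i * T i = ∑ s : S, B s * t s := by
    intro B
    have h1 : ∑ s : S, B s * t s = ∑ s : S, B s * T s :=
      Finset.sum_congr rfl fun s _ => by simp [T]
    rw [h1, Finset.sum_coe_sort S (fun i => B i * T i)]
    refine (Finset.sum_subset (Finset.subset_univ S) fun i _ hi => ?_).symm
    simp [T, hi]
  have hUx : U *ᵥ (V *ᵥ T) = 0 := by
    rw [Matrix.mulVec_mulVec]
    ext k
    rw [← ht']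
    simp only [Matrix.mulVec, dotProduct]
    rw [hT]
    rfl
  have hq := hU _ hUx
  have hdiag : Vᴴ * A * V = diagonal (RCLike.ofReal ∘ hA.eigenvalues) := by
    have := hA.conjStarAlgAut_star_eigenvectorUnitary
    rw [Unitary.conjStarAlgAut_apply] at this
    simpa [Matrix.star_eq_conjTranspose] using this
  have hq2 : star (V *ᵥ T) ⬝ᵥ A *ᵥ (V *ᵥ T) = ∑ i, (hA.eigenvalues i : ℂ) * (‖T i‖ ^ 2 : ℝ) := by
    rw [Matrix.star_mulVec, Matrix.dotProduct_mulVec, Matrix.vecMul_vecMul, Matrix.dotProduct_mulVec,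
      Matrix.vecMul_vecMul, hdiag]
    simp only [Matrix.vecMul_diagonal, dotProduct, Function.comp]
    refine Finset.sum_congr rfl fun i _ => ?_
    have := Complex.mul_conj' (T i)
    simp only [Pi.star_apply, RCLike.star_def, Complex.coe_algebraMap]
    push_cast
    linear_combination (hA.eigenvalues i : ℂ) * this
  rw [hq2] at hq
  have hq3 : (∑ i, (hA.eigenvalues i : ℂ) * (‖T i‖ ^ 2 : ℝ)).re = ∑ i, hA.eigenvalues i * ‖T i‖ ^ 2 := by
    rw [Complex.re_sum]
    refine Finset.sum_congr rfl fun i _ => ?_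
    rw [← Complex.ofReal_mul, Complex.ofReal_re]
  rw [hq3, Finset.mul_sum] at hq
  obtain ⟨s, hs⟩ : ∃ s, t s ≠ 0 := by
    by_contra hall
    push Not at hall
    exact ht0 (funext hall)
  have hpos : 0 < ∑ i, σ * (hA.eigenvalues i * ‖T i‖ ^ 2) := by
    apply Finset.sum_pos'
    · intro i _
      by_cases hi : i ∈ S
      · have : 0 < σ * hA.eigenvalues i := by simpa [hS] using hi
        rw [← mul_assoc]; positivity
      · simp [T, hi]
    · refine ⟨s, Finset.mem_univ _, ?_⟩
      have h1 : 0 < σ * hA.eigenvalues s := (Finset.mem_filter.1 s.2).2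
      have h2 : T s = t s := by simp [T]
      rw [h2, ← mul_assoc]
      positivity
  linarith

lemma tk_quad {N m n : ℕ} (A : Matrix (Fin N) (Fin N) ℂ) (U : Fin m → Fin N → ℂ) (V : Fin n → Fin N → ℂ)
    (h : ∀ i j, A i j = ∑ k, U k i * starRingEnd ℂ (U k j) - ∑ k, V k i * starRingEnd ℂ (V k j))
    (x : Fin N → ℂ) :
    (star x ⬝ᵥ A *ᵥ x).re = ∑ k, ‖∑ j, starRingEnd ℂ (U k j) * x j‖ ^ 2 -
      ∑ k, ‖∑ j, starRingEnd ℂ (V k j) * x j‖ ^ 2 := by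
  have key : ∀ {l : ℕ} (U : Fin l → Fin N → ℂ),
      ∑ i, ∑ j, starRingEnd ℂ (x i) * (∑ k, U k i * starRingEnd ℂ (U k j)) * x j =
        ((∑ k, ‖∑ j, starRingEnd ℂ (U k j) * x j‖ ^ 2 : ℝ) : ℂ) := by
    intro l U
    push_cast
    have h1 : ∀ k, ((‖∑ j, starRingEnd ℂ (U k j) * x j‖ : ℝ) : ℂ) ^ 2 =
        ∑ i, ∑ j, starRingEnd ℂ (x i) * (U k i * starRingEnd ℂ (U k j)) * x j := by
      intro k
      rw [← Complex.mul_conj', mul_comm, map_sum, Finset.sum_mul_sum]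
      refine Finset.sum_congr rfl fun i _ => Finset.sum_congr rfl fun j _ => ?_
      rw [map_mul, Complex.conj_conj]
      ring
    simp_rw [h1]
    symm
    rw [Finset.sum_comm]
    refine Finset.sum_congr rfl fun i _ => ?_
    rw [Finset.sum_comm]
    refine Finset.sum_congr rfl fun j _ => ?_
    rw [Finset.mul_sum, Finset.sum_mul]
  have : star x ⬝ᵥ A *ᵥ x = ((∑ k, ‖∑ j, starRingEnd ℂ (U k j) * x j‖ ^ 2 -
      ∑ k, ‖∑ j, starRingEnd ℂ (V k j) * x j‖ ^ 2 : ℝ) : ℂ) := by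
    rw [Complex.ofReal_sub, ← key, ← key]
    simp only [dotProduct, mulVec, Finset.mul_sum, ← Finset.sum_sub_distrib, h]
    refine Finset.sum_congr rfl fun i _ => Finset.sum_congr rfl fun j _ => ?_
    simp only [Pi.star_apply, RCLike.star_def, sub_mul, mul_sub, Finset.sum_mul, Finset.mul_sum]
    congr 1 <;> exact Finset.sum_congr rfl fun k _ => by ring
  rw [this, Complex.ofReal_re]

/-- `a + (z - 1) ∑ βⱼ / (1 - λ̄ⱼ z)` -/
noncomputable def tkFun {N : ℕ} (lam : Fin N → ℂ) (a : ℂ) (β : Fin N → ℂ) (z : ℂ) : ℂ :=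
  a + (z - 1) * ∑ j, β j / (1 - starRingEnd ℂ (lam j) * z)

section
open Polynomial

noncomputable def tkPoly {N : ℕ} (lam : Fin N → ℂ) (a : ℂ) (β : Fin N → ℂ) : ℂ[X] :=
  C a * ∏ j, (1 - C (starRingEnd ℂ (lam j)) * X) +
    (X - C 1) * ∑ j, C (β j) * ∏ k ∈ univ.erase j, (1 - C (starRingEnd ℂ (lam k)) * X)

lemma tkPoly_eval {N : ℕ} (lam : Fin N → ℂ) (a : ℂ) (β : Fin N → ℂ) (z : ℂ)
    (hz : ∀ j, 1 - starRingEnd ℂ (lam j) * z ≠ 0) :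
    (tkPoly lam a β).eval z = (∏ j, (1 - starRingEnd ℂ (lam j) * z)) * tkFun lam a β z := by
  unfold tkPoly tkFun
  simp only [eval_add, eval_mul, eval_C, eval_sub, eval_X, eval_finsetSum, eval_prod, eval_one]
  have : ∀ j, β j * ∏ k ∈ univ.erase j, (1 - starRingEnd ℂ (lam k) * z) =
      (∏ j, (1 - starRingEnd ℂ (lam j) * z)) * (β j / (1 - starRingEnd ℂ (lam j) * z)) := by
    intro j
    rw [← Finset.mul_prod_erase univ _ (Finset.mem_univ j), mul_div_assoc', eq_div_iff (hz j)]
    ring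
  simp_rw [this, ← Finset.mul_sum]
  ring

lemma tk_lin_deg (r : ℂ) : (1 - C r * X : ℂ[X]).natDegree ≤ 1 := by
  compute_degree

lemma tkPoly_deg {N : ℕ} (lam : Fin N → ℂ) (a : ℂ) (β : Fin N → ℂ) :
    (tkPoly lam a β).natDegree ≤ N := by
  unfold tkPoly
  have hp : ∀ s : Finset (Fin N), (∏ k ∈ s, (1 - C (starRingEnd ℂ (lam k)) * X) : ℂ[X]).natDegree ≤ s.card := by
    intro s
    refine (natDegree_prod_le _ _).trans ?_
    refine (Finset.sum_le_card_nsmul s _ 1 fun k _ => tk_lin_deg _).trans (by simp)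
  refine natDegree_add_le_of_degree_le ?_ ?_
  · refine (natDegree_C_mul_le _ _).trans ((hp univ).trans (by simp))
  · rcases Nat.eq_zero_or_pos N with rfl | hN
    · simp
    refine natDegree_mul_le.trans ?_
    have : (∑ j, C (β j) * ∏ k ∈ univ.erase j, (1 - C (starRingEnd ℂ (lam k)) * X) : ℂ[X]).natDegree ≤ N - 1 := by
      refine natDegree_sum_le_of_forall_le _ _ fun j _ => ?_
      refine (natDegree_C_mul_le _ _).trans ((hp _).trans ?_)
      simp
    rw [natDegree_X_sub_C]
    omega
end

section
variable {N : ℕ} (lam w : Fin N → ℂ) (M : Matrix (Fin N) (Fin N) ℂ)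

lemma tk_interp
    (hM : ∀ i j, M i j = (1 - w i * starRingEnd ℂ (w j)) / (1 - lam i * starRingEnd ℂ (lam j)))
    (a b : ℂ) (α : Fin N → ℂ)
    (hα : ∀ i, (1 - lam i) * ∑ j, M i j * α j = a - w i * b) (i : Fin N) :
    tkFun lam a α (lam i) = w i * tkFun lam b (fun j => starRingEnd ℂ (w j) * α j) (lam i) := by
  have h1 : ∑ j, M i j * α j = (∑ j, α j / (1 - starRingEnd ℂ (lam j) * lam i)) -
      w i * ∑ j, starRingEnd ℂ (w j) * α j / (1 - starRingEnd ℂ (lam j) * lam i) := by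
    rw [Finset.mul_sum, ← Finset.sum_sub_distrib]
    refine Finset.sum_congr rfl fun j _ => ?_
    rw [hM, mul_comm (lam i)]
    ring
  have := hα i
  rw [h1] at this
  unfold tkFun
  linear_combination -this

lemma tk_circle (hlam : ∀ i, ‖lam i‖ < 1)
    (hM : ∀ i j, M i j = (1 - w i * starRingEnd ℂ (w j)) / (1 - lam i * starRingEnd ℂ (lam j)))
    (a b : ℂ) (ha : ‖a‖ = 1) (hb : ‖b‖ = 1) (α : Fin N → ℂ)
    (hα : ∀ i, (1 - lam i) * ∑ j, M i j * α j = a - w i * b) (z : ℂ) (hz : ‖z‖ = 1) :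
    ‖tkFun lam a α z‖ = ‖tkFun lam b (fun j => starRingEnd ℂ (w j) * α j) z‖ := by
  have hMc : ∀ i j, starRingEnd ℂ (M i j) = M j i := by
    intro i j
    rw [hM, hM]
    simp only [map_div₀, map_sub, map_mul, map_one, Complex.conj_conj]
    congr 1 <;> ring
  obtain ⟨D, hD⟩ : ∃ D : Fin N → ℂ, ∀ i, ∑ j, M i j * α j = D i := ⟨_, fun i => rfl⟩
  have hD' : ∀ j, ∑ i, starRingEnd ℂ (α i) * M i j = starRingEnd ℂ (D j) := by
    intro j
    rw [← hD, map_sum]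
    refine Finset.sum_congr rfl fun i _ => ?_
    rw [map_mul, hMc]; ring
  have hα1 : ∀ i, (1 - lam i) * D i = a - w i * b := fun i => by rw [← hD]; exact hα i
  have hα2 : ∀ i, (1 - starRingEnd ℂ (lam i)) * starRingEnd ℂ (D i) =
      starRingEnd ℂ a - starRingEnd ℂ (w i) * starRingEnd ℂ b := fun i => by
    have := congrArg (starRingEnd ℂ) (hα1 i)
    simpa using this
  have hsym : ∑ j, starRingEnd ℂ (α j) * D j = ∑ j, α j * starRingEnd ℂ (D j) := by
    simp_rw [← hD', ← hD, Finset.mul_sum]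
    rw [Finset.sum_comm]
    exact Finset.sum_congr rfl fun j _ => Finset.sum_congr rfl fun i _ => by ring
  have hzz : z * starRingEnd ℂ z = 1 := by rw [Complex.mul_conj', hz]; simp
  have haa : a * starRingEnd ℂ a = 1 := by rw [Complex.mul_conj', ha]; simp
  have hbb : b * starRingEnd ℂ b = 1 := by rw [Complex.mul_conj', hb]; simp
  have hd1 : ∀ j, 1 - starRingEnd ℂ (lam j) * z ≠ 0 := fun j => by
    rw [mul_comm]; exact tk_den_ne _ _ hz.le (by rw [tk_conj_norm]; exact hlam j)
  have hd2 : ∀ j, 1 - lam j * starRingEnd ℂ z ≠ 0 := fun j => by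
    rw [mul_comm]; exact tk_den_ne _ _ (by rw [tk_conj_norm]; exact hz.le) (hlam j)
  have hd3 : ∀ i j, 1 - lam i * starRingEnd ℂ (lam j) ≠ 0 := fun i j =>
    tk_den_ne _ _ (hlam i).le (by rw [tk_conj_norm]; exact hlam j)
  have main : tkFun lam b (fun j => starRingEnd ℂ (w j) * α j) z *
      starRingEnd ℂ (tkFun lam b (fun j => starRingEnd ℂ (w j) * α j) z) =
      tkFun lam a α z * starRingEnd ℂ (tkFun lam a α z) := by
    unfold tkFun
    simp only [map_add, map_mul, map_sub, map_one, map_sum, map_div₀, Complex.conj_conj]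
    generalize starRingEnd ℂ z = y at *
    generalize starRingEnd ℂ a = a' at *
    generalize starRingEnd ℂ b = b' at *
    obtain ⟨S1, hS1⟩ : ∃ S, S = ∑ j, α j / (1 - starRingEnd ℂ (lam j) * z) := ⟨_, rfl⟩
    obtain ⟨S2, hS2⟩ : ∃ S, S = ∑ j, starRingEnd ℂ (w j) * α j / (1 - starRingEnd ℂ (lam j) * z) := ⟨_, rfl⟩
    obtain ⟨T1, hT1⟩ : ∃ S, S = ∑ j, starRingEnd ℂ (α j) / (1 - lam j * y) := ⟨_, rfl⟩
    obtain ⟨T2, hT2⟩ : ∃ S, S = ∑ j, w j * starRingEnd ℂ (α j) / (1 - lam j * y) := ⟨_, rfl⟩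
    rw [← hS1, ← hS2, ← hT1, ← hT2]
    have e1 : S1 * T1 - S2 * T2 = ∑ i, starRingEnd ℂ (α i) * D i / (1 - lam i * y) +
        ∑ j, starRingEnd ℂ (lam j) * z * (α j * starRingEnd ℂ (D j)) / (1 - starRingEnd ℂ (lam j) * z) := by
      have l1 : ∑ i, starRingEnd ℂ (α i) * D i / (1 - lam i * y) =
          ∑ i, ∑ j, starRingEnd ℂ (α i) * α j * M i j / (1 - lam i * y) := by
        refine Finset.sum_congr rfl fun i _ => ?_
        rw [← hD, Finset.mul_sum, Finset.sum_div]
        exact Finset.sum_congr rfl fun j _ => by ring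
      have l2 : ∑ j, starRingEnd ℂ (lam j) * z * (α j * starRingEnd ℂ (D j)) / (1 - starRingEnd ℂ (lam j) * z) =
          ∑ i, ∑ j, starRingEnd ℂ (α i) * α j * M i j * (starRingEnd ℂ (lam j) * z) / (1 - starRingEnd ℂ (lam j) * z) := by
        rw [Finset.sum_comm]
        refine Finset.sum_congr rfl fun i _ => ?_
        rw [← hD', Finset.mul_sum, Finset.mul_sum, Finset.sum_div]
        exact Finset.sum_congr rfl fun j _ => by ring
      rw [l1, l2, hS1, hS2, hT1, hT2, mul_comm, Finset.sum_mul_sum, mul_comm, Finset.sum_mul_sum,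
        ← Finset.sum_add_distrib, ← Finset.sum_sub_distrib]
      refine Finset.sum_congr rfl fun i _ => ?_
      rw [← Finset.sum_add_distrib, ← Finset.sum_sub_distrib]
      refine Finset.sum_congr rfl fun j _ => ?_
      have hm : M i j * (1 - lam i * starRingEnd ℂ (lam j)) = 1 - w i * starRingEnd ℂ (w j) := by
        rw [hM, div_mul_cancel₀ _ (hd3 i j)]
      have f1 := hd1 j
      have f2 := hd2 i
      clear hM hα hα1 hα2 hS1 hS2 hT1 hT2 l1 l2 hD hD' hsym hMc hd1 hd2 hd3
      generalize starRingEnd ℂ (α i) = x1 at *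
      generalize starRingEnd ℂ (lam j) = l' at *
      generalize starRingEnd ℂ (w j) = w' at *
      field_simp
      linear_combination - x1 * α j * hm + x1 * α j * M i j * l' * lam i * hzz
    have e2 : b' * S2 - a' * S1 = - ∑ j, α j * ((1 - starRingEnd ℂ (lam j)) * starRingEnd ℂ (D j)) / (1 - starRingEnd ℂ (lam j) * z) := by
      rw [hS1, hS2, Finset.mul_sum, Finset.mul_sum, ← Finset.sum_sub_distrib, ← Finset.sum_neg_distrib]
      refine Finset.sum_congr rfl fun j _ => ?_
      rw [hα2]; ring
    have e3 : b * T2 - a * T1 = - ∑ j, starRingEnd ℂ (α j) * ((1 - lam j) * D j) / (1 - lam j * y) := by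
      rw [hT1, hT2, Finset.mul_sum, Finset.mul_sum, ← Finset.sum_sub_distrib, ← Finset.sum_neg_distrib]
      refine Finset.sum_congr rfl fun j _ => ?_
      rw [hα1]; ring
    have e4 : (z - 1) * (b' * S2 - a' * S1) - (z - 1) * (y - 1) * ∑ j, starRingEnd ℂ (lam j) * z * (α j * starRingEnd ℂ (D j)) / (1 - starRingEnd ℂ (lam j) * z)
        = -(z - 1) * ∑ j, α j * starRingEnd ℂ (D j) := by
      rw [e2, mul_neg, ← neg_mul, Finset.mul_sum, Finset.mul_sum, Finset.mul_sum, ← Finset.sum_sub_distrib]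
      refine Finset.sum_congr rfl fun j _ => ?_
      have f1 := hd1 j
      generalize starRingEnd ℂ (lam j) = l' at *
      generalize starRingEnd ℂ (D j) = D' at *
      rw [mul_div_assoc', mul_div_assoc', ← sub_div, div_eq_iff f1]
      linear_combination -(z - 1) * l' * α j * D' * hzz
    have e5 : (y - 1) * (b * T2 - a * T1) - (z - 1) * (y - 1) * ∑ i, starRingEnd ℂ (α i) * D i / (1 - lam i * y)
        = (z - 1) * ∑ j, starRingEnd ℂ (α j) * D j := by
      rw [e3, mul_neg, ← neg_mul, Finset.mul_sum, Finset.mul_sum, Finset.mul_sum, ← Finset.sum_sub_distrib]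
      refine Finset.sum_congr rfl fun j _ => ?_
      have f1 := hd2 j
      generalize starRingEnd ℂ (α j) = x1 at *
      rw [mul_div_assoc', mul_div_assoc', ← sub_div, div_eq_iff f1]
      linear_combination - x1 * D j * (1 - lam j) * hzz
    linear_combination hbb - haa + e4 + e5 - (z - 1) * (y - 1) * e1 + (z - 1) * hsym
  rw [Complex.mul_conj', Complex.mul_conj'] at main
  have h4 : ‖tkFun lam b (fun j => starRingEnd ℂ (w j) * α j) z‖ ^ 2 = ‖tkFun lam a α z‖ ^ 2 := by
    exact_mod_cast main
  exact ((pow_left_inj₀ (norm_nonneg _) (norm_nonneg _) two_ne_zero).1 h4).symm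

lemma tk_fun_sub (hlam : ∀ i, ‖lam i‖ < 1) (a : ℂ) (β : Fin N → ℂ) (i k : Fin N)
    (h : tkFun lam a β (lam i) = 0) :
    tkFun lam a β (lam k) = (lam k - lam i) * ∑ j, (β j * ((1 - starRingEnd ℂ (lam j)) /
      (1 - starRingEnd ℂ (lam j) * lam i))) / (1 - starRingEnd ℂ (lam j) * lam k) := by
  rw [← sub_zero (tkFun lam a β (lam k)), ← h]
  unfold tkFun
  rw [add_sub_add_left_eq_sub, Finset.mul_sum, Finset.mul_sum, Finset.mul_sum, ← Finset.sum_sub_distrib]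
  refine Finset.sum_congr rfl fun j _ => ?_
  have f1 := tk_den_ne (starRingEnd ℂ (lam j)) (lam i) (by rw [tk_conj_norm]; exact (hlam j).le) (hlam i)
  have f2 := tk_den_ne (starRingEnd ℂ (lam j)) (lam k) (by rw [tk_conj_norm]; exact (hlam j).le) (hlam k)
  generalize starRingEnd ℂ (lam j) = l' at *
  obtain ⟨d1, hd1⟩ : ∃ d, d = 1 - l' * lam i := ⟨_, rfl⟩
  obtain ⟨d2, hd2⟩ : ∃ d, d = 1 - l' * lam k := ⟨_, rfl⟩
  rw [← hd1] at f1 ⊢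
  rw [← hd2] at f2 ⊢
  field_simp
  rw [hd1, hd2]
  ring

lemma tk_a_eq (hlam : ∀ i, ‖lam i‖ < 1) (a : ℂ) (β : Fin N → ℂ) (i : Fin N)
    (h : tkFun lam a β (lam i) = 0) :
    a = (1 - lam i) * ∑ j, (β j * ((1 - starRingEnd ℂ (lam j)) /
      (1 - starRingEnd ℂ (lam j) * lam i))) / (1 - starRingEnd ℂ (lam j)) := by
  have : a = (1 - lam i) * ∑ j, β j / (1 - starRingEnd ℂ (lam j) * lam i) := by
    unfold tkFun at h
    linear_combination h
  rw [this]
  congr 1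
  refine Finset.sum_congr rfl fun j _ => ?_
  have f1 := tk_den_ne 1 (starRingEnd ℂ (lam j)) (by simp) (by rw [tk_conj_norm]; exact (hlam j))
  rw [one_mul] at f1
  generalize starRingEnd ℂ (lam j) = l' at *
  field_simp

lemma tk_nonvanish (hlam : ∀ i, ‖lam i‖ < 1) (hdist : Function.Injective lam)
    (hM : ∀ i j, M i j = (1 - w i * starRingEnd ℂ (w j)) / (1 - lam i * starRingEnd ℂ (lam j)))
    (hdet : IsUnit M.det) (i : Fin N) : ∃ G1 G2 : ℂ, ∀ (a b : ℂ) (α : Fin N → ℂ),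
    (∀ i, (1 - lam i) * ∑ j, M i j * α j = a - w i * b) →
    tkFun lam b (fun j => starRingEnd ℂ (w j) * α j) (lam i) = 0 →
    ∃ s, a = s * G1 ∧ b = s * G2 := by
  classical
  obtain ⟨g, hg⟩ : ∃ g, g = M⁻¹ *ᵥ (Pi.single i 1) := ⟨_, rfl⟩
  refine ⟨(1 - lam i) * ∑ j, g j / (1 - starRingEnd ℂ (lam j)),
    (1 - lam i) * ∑ j, starRingEnd ℂ (w j) * g j / (1 - starRingEnd ℂ (lam j)), ?_⟩
  intro a b α hα hQ
  have hP : tkFun lam a α (lam i) = 0 := by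
    rw [tk_interp lam w M hM a b α hα i, hQ, mul_zero]
  obtain ⟨γ, hγ⟩ : ∃ γ : Fin N → ℂ, ∀ j, γ j = α j * ((1 - starRingEnd ℂ (lam j)) /
      (1 - starRingEnd ℂ (lam j) * lam i)) := ⟨_, fun j => rfl⟩
  have hMγ : ∀ k, k ≠ i → (M *ᵥ γ) k = 0 := by
    intro k hk
    have h1 := tk_fun_sub lam hlam a α i k hP
    have h2 := tk_fun_sub lam hlam b _ i k hQ
    have h3 := tk_interp lam w M hM a b α hα k
    have hne : lam k - lam i ≠ 0 := sub_ne_zero.2 fun h => hk (hdist h)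
    apply mul_left_cancel₀ hne
    rw [mul_zero]
    have h4 : (M *ᵥ γ) k = ∑ j, (α j * ((1 - starRingEnd ℂ (lam j)) /
      (1 - starRingEnd ℂ (lam j) * lam i))) / (1 - starRingEnd ℂ (lam j) * lam k) -
      w k * ∑ j, (starRingEnd ℂ (w j) * α j * ((1 - starRingEnd ℂ (lam j)) /
      (1 - starRingEnd ℂ (lam j) * lam i))) / (1 - starRingEnd ℂ (lam j) * lam k) := by
      simp only [mulVec, dotProduct]
      rw [Finset.mul_sum, ← Finset.sum_sub_distrib]
      refine Finset.sum_congr rfl fun j _ => ?_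
      rw [hM, hγ, mul_comm (lam k)]
      ring
    rw [h4]
    linear_combination h3 - h1 + w k * h2
  have hs : M *ᵥ γ = (M *ᵥ γ) i • Pi.single i (1 : ℂ) := by
    ext k
    by_cases hk : k = i
    · subst hk; simp
    · simp [hMγ k hk, hk]
  have hγg : ∀ j, γ j = (M *ᵥ γ) i * g j := by
    intro j
    have : γ = M⁻¹ *ᵥ (M *ᵥ γ) := by
      rw [Matrix.mulVec_mulVec, Matrix.nonsing_inv_mul _ hdet, Matrix.one_mulVec]
    rw [hs, Matrix.mulVec_smul, ← hg] at this
    exact congrFun this j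
  refine ⟨(M *ᵥ γ) i, ?_, ?_⟩
  · rw [tk_a_eq lam hlam a α i hP, mul_left_comm]
    congr 1
    rw [Finset.mul_sum]
    refine Finset.sum_congr rfl fun j _ => ?_
    rw [← hγ, hγg]; ring
  · rw [tk_a_eq lam hlam b _ i hQ, mul_left_comm]
    congr 1
    rw [Finset.mul_sum]
    refine Finset.sum_congr rfl fun j _ => ?_
    rw [mul_assoc (starRingEnd ℂ (w j)), ← hγ, hγg]; ring
end

/-- existence of a quotient of Blaschke products of total degree at most `N` -/
lemma tk_exists {N : ℕ} (lam w : Fin N → ℂ) (M : Matrix (Fin N) (Fin N) ℂ)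
    (hlam : ∀ i, ‖lam i‖ < 1) (hdist : Function.Injective lam)
    (hM : ∀ i j, M i j = (1 - w i * starRingEnd ℂ (w j)) / (1 - lam i * starRingEnd ℂ (lam j)))
    (hdet : IsUnit M.det) :
    ∃ (m n : ℕ) (c : ℂ) (A : Fin m → ℂ) (B : Fin n → ℂ), m + n ≤ N ∧ ‖c‖ = 1 ∧
    (∀ k, ‖A k‖ < 1) ∧ (∀ k, ‖B k‖ < 1) ∧
    (∀ i, blaschkeProd 1 B (lam i) ≠ 0 ∧
      blaschkeProd c A (lam i) = w i * blaschkeProd 1 B (lam i)) := by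
  have hl1 : ∀ i, 1 - lam i ≠ 0 := fun i => by
    have := tk_den_ne 1 (lam i) (by simp) (hlam i)
    rwa [one_mul] at this
  -- the solutions of the linear system
  obtain ⟨al, hal⟩ : ∃ al : ℂ → ℂ → Fin N → ℂ, ∀ a b, al a b =
    M⁻¹ *ᵥ (fun i => (a - w i * b) / (1 - lam i)) := ⟨_, fun a b => rfl⟩
  have hsol : ∀ a b i, (1 - lam i) * ∑ j, M i j * al a b j = a - w i * b := by
    intro a b i
    have h1 : M *ᵥ al a b = fun i => (a - w i * b) / (1 - lam i) := by
      rw [hal, Matrix.mulVec_mulVec, Matrix.mul_nonsing_inv _ hdet, Matrix.one_mulVec]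
    have h2 : ∑ j, M i j * al a b j = (a - w i * b) / (1 - lam i) := congrFun h1 i
    rw [h2, mul_div_cancel₀ _ (hl1 i)]
  have hlinear : ∀ u j, al u 1 j = u * al 1 0 j + al 0 1 j := by
    intro u j
    have : (fun i => (u - w i * 1) / (1 - lam i)) =
        u • (fun i => ((1 : ℂ) - w i * 0) / (1 - lam i)) + (fun i => ((0 : ℂ) - w i * 1) / (1 - lam i)) := by
      ext i
      simp only [Pi.add_apply, Pi.smul_apply, smul_eq_mul]
      ring
    rw [hal, hal, hal, this, Matrix.mulVec_add, Matrix.mulVec_smul]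
    rfl
  obtain ⟨Q, hQ⟩ : ∃ Q : ℂ → ℂ → ℂ → ℂ, ∀ a b z, Q a b z =
    tkFun lam b (fun j => starRingEnd ℂ (w j) * al a b j) z := ⟨_, fun a b z => rfl⟩
  have hQlin : ∀ u z, Q u 1 z = u * Q 1 0 z + Q 0 1 z := by
    intro u z
    rw [hQ, hQ, hQ]
    unfold tkFun
    have : ∑ j, starRingEnd ℂ (w j) * al u 1 j / (1 - starRingEnd ℂ (lam j) * z) =
        u * ∑ j, starRingEnd ℂ (w j) * al 1 0 j / (1 - starRingEnd ℂ (lam j) * z) +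
        ∑ j, starRingEnd ℂ (w j) * al 0 1 j / (1 - starRingEnd ℂ (lam j) * z) := by
      rw [Finset.mul_sum, ← Finset.sum_add_distrib]
      refine Finset.sum_congr rfl fun j _ => ?_
      rw [hlinear]; ring
    rw [this]; ring
  have hbad : ∀ i, {u : ℂ | Q u 1 (lam i) = 0}.Finite := by
    intro i
    by_cases h10 : Q 1 0 (lam i) = 0
    · have h01 : Q 0 1 (lam i) ≠ 0 := by
        intro h01
        obtain ⟨G1, G2, hG⟩ := tk_nonvanish lam w M hlam hdist hM hdet i
        obtain ⟨s, hs1, hs2⟩ := hG 1 0 _ (hsol 1 0) (by rw [← hQ]; exact h10)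
        obtain ⟨t, ht1, ht2⟩ := hG 0 1 _ (hsol 0 1) (by rw [← hQ]; exact h01)
        rcases mul_eq_zero.1 hs2.symm with h | h
        · rw [h, zero_mul] at hs1; exact one_ne_zero hs1
        · rw [h, mul_zero] at ht2; exact one_ne_zero ht2
      refine Set.Finite.subset Set.finite_empty fun u hu => ?_
      have hu : Q u 1 (lam i) = 0 := hu
      rw [hQlin, h10, mul_zero, zero_add] at hu
      exact absurd hu h01
    · refine (Set.finite_singleton (-(Q 0 1 (lam i)) / Q 1 0 (lam i))).subset fun u hu => ?_
      have hu : Q u 1 (lam i) = 0 := hu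
      rw [hQlin] at hu
      rw [Set.mem_singleton_iff, eq_div_iff h10]
      linear_combination hu
  obtain ⟨u, hu1, hu2⟩ := (tk_circle_infinite.sdiff (Set.finite_iUnion hbad)).nonempty
  have hu1 : ‖u‖ = 1 := hu1
  have hQne : ∀ i, Q u 1 (lam i) ≠ 0 := fun i hi => hu2 (Set.mem_iUnion.2 ⟨i, hi⟩)
  have hden : ∀ z : ℂ, ‖z‖ ≤ 1 → ∀ j, 1 - starRingEnd ℂ (lam j) * z ≠ 0 := fun z hz j => by
    rw [mul_comm]; exact tk_den_ne _ _ hz (by rw [tk_conj_norm]; exact hlam j)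
  have hprod : ∀ z : ℂ, ‖z‖ ≤ 1 → ∏ j, (1 - starRingEnd ℂ (lam j) * z) ≠ 0 := fun z hz =>
    Finset.prod_ne_zero_iff.2 fun j _ => hden z hz j
  obtain ⟨p, hp⟩ : ∃ p, p = tkPoly lam u (al u 1) := ⟨_, rfl⟩
  obtain ⟨q, hq⟩ : ∃ q, q = tkPoly lam 1 (fun j => starRingEnd ℂ (w j) * al u 1 j) := ⟨_, rfl⟩
  have hpz : ∀ z : ℂ, ‖z‖ ≤ 1 → p.eval z =
      (∏ j, (1 - starRingEnd ℂ (lam j) * z)) * tkFun lam u (al u 1) z := fun z hz => by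
    rw [hp]; exact tkPoly_eval lam u (al u 1) z (hden z hz)
  have hqz : ∀ z : ℂ, ‖z‖ ≤ 1 → q.eval z =
      (∏ j, (1 - starRingEnd ℂ (lam j) * z)) *
        tkFun lam 1 (fun j => starRingEnd ℂ (w j) * al u 1 j) z := fun z hz => by
    rw [hq]; exact tkPoly_eval lam 1 _ z (hden z hz)
  have hp0 : p ≠ 0 := by
    intro h0
    have h1 := hpz 1 (by simp)
    rw [h0, Polynomial.eval_zero] at h1
    rcases mul_eq_zero.1 h1.symm with h2 | h2
    · exact hprod 1 (by simp) h2
    · simp only [tkFun, sub_self, zero_mul, add_zero] at h2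
      rw [h2] at hu1; simp at hu1
  have hq0 : q ≠ 0 := by
    intro h0
    have h1 := hqz 1 (by simp)
    rw [h0, Polynomial.eval_zero] at h1
    rcases mul_eq_zero.1 h1.symm with h2 | h2
    · exact hprod 1 (by simp) h2
    · simp [tkFun] at h2
  have hpd : p.natDegree ≤ N := by rw [hp]; exact tkPoly_deg _ _ _
  have hqd : q.natDegree ≤ N := by rw [hq]; exact tkPoly_deg _ _ _
  have hid := tkRev_ident N p q hpd hqd (fun z hz => by
    rw [hpz z hz.le, hqz z hz.le, norm_mul, norm_mul,
      tk_circle lam w M hlam hM u 1 hu1 (by simp) _ (hsol u 1) z hz])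
  obtain ⟨m, n, c, A, B, hmn, hc, hA, hB, h1, h2⟩ := tk_factor N p q hpd hqd hp0 hq0 hid
  refine ⟨m, n, c, A, B, hmn, hc, hA, hB, fun i => ?_⟩
  have hqi : q.eval (lam i) ≠ 0 := by
    rw [hqz _ (hlam i).le]
    refine mul_ne_zero (hprod _ (hlam i).le) ?_
    rw [← hQ]; exact hQne i
  have hpi : p.eval (lam i) = w i * q.eval (lam i) := by
    rw [hpz _ (hlam i).le, hqz _ (hlam i).le, tk_interp lam w M hM u 1 _ (hsol u 1) i]
    ring
  have h3 := h1 (lam i) (hlam i)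
  constructor
  · intro hg
    rw [hg, mul_zero] at h3
    exact h2 _ (hlam i) ((mul_eq_zero.1 h3.symm).resolve_left hqi) hg
  · apply mul_left_cancel₀ hqi
    rw [← h3, hpi]
    ring

lemma tk_bp_circle {n : ℕ} (c : ℂ) (hc : ‖c‖ = 1) (A : Fin n → ℂ) (hA : ∀ k, ‖A k‖ < 1) (z : ℂ)
    (hz : ‖z‖ = 1) : ‖blaschkeProd c A z‖ = 1 := by
  unfold blaschkeProd
  rw [norm_mul, hc, one_mul, norm_prod]
  refine Finset.prod_eq_one fun k _ => ?_
  have hd : 1 - starRingEnd ℂ (A k) * z ≠ 0 := by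
    rw [mul_comm]; exact tk_den_ne _ _ hz.le (by rw [tk_conj_norm]; exact hA k)
  have hzz : z * starRingEnd ℂ z = 1 := by rw [Complex.mul_conj', hz]; simp
  have : 1 - starRingEnd ℂ (A k) * z = z * starRingEnd ℂ (z - A k) := by
    rw [map_sub]; linear_combination -hzz
  have h2 : ‖1 - starRingEnd ℂ (A k) * z‖ = ‖z - A k‖ := by
    rw [this, norm_mul, hz, one_mul, tk_conj_norm]
  rw [norm_div, h2, div_self]
  rw [← h2]; simpa using hd

lemma tk_main {N : ℕ} (lam w : Fin N → ℂ) (M : Matrix (Fin N) (Fin N) ℂ)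
    (hlam : ∀ i, ‖lam i‖ < 1) (hdist : Function.Injective lam)
    (hM : ∀ i j, M i j = (1 - w i * starRingEnd ℂ (w j)) / (1 - lam i * starRingEnd ℂ (lam j)))
    (hdet : IsUnit M.det) (hherm : M.IsHermitian) :
    ∃ (m n : ℕ) (c : ℂ) (A : Fin m → ℂ) (B : Fin n → ℂ),
    (Finset.univ.filter fun i => 0 < hherm.eigenvalues i).card = m ∧
    (Finset.univ.filter fun i => hherm.eigenvalues i < 0).card = n ∧ ‖c‖ = 1 ∧
    (∀ k, ‖A k‖ < 1) ∧ (∀ k, ‖B k‖ < 1) ∧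
    (∀ i, blaschkeProd 1 B (lam i) ≠ 0 ∧
      blaschkeProd c A (lam i) = w i * blaschkeProd 1 B (lam i)) := by
  obtain ⟨m, n, c, A, B, hmn, hc, hA, hB, h⟩ := tk_exists lam w M hlam hdist hM hdet
  obtain ⟨E, hE⟩ := tk_kernel c hc A hA
  obtain ⟨F, hF⟩ := tk_kernel 1 (by simp) B hB
  have hdec : ∀ i j, M i j =
      ∑ k, (E k (lam i) / blaschkeProd 1 B (lam i)) * starRingEnd ℂ (E k (lam j) / blaschkeProd 1 B (lam j)) -
      ∑ k, (F k (lam i) / blaschkeProd 1 B (lam i)) * starRingEnd ℂ (F k (lam j) / blaschkeProd 1 B (lam j)) := by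
    intro i j
    have hd := tk_den_ne (lam i) (starRingEnd ℂ (lam j)) (hlam i).le (by rw [tk_conj_norm]; exact hlam j)
    have e1 := hE (lam i) (lam j) (hlam i) (hlam j)
    have e2 := hF (lam i) (lam j) (hlam i) (hlam j)
    rw [(h i).2, (h j).2] at e1
    have gi := (h i).1
    have gj := (h j).1
    have gj' : starRingEnd ℂ (blaschkeProd 1 B (lam j)) ≠ 0 := by simpa using gj
    have pull : ∀ {l : ℕ} (G : Fin l → ℂ → ℂ), ∑ k, (G k (lam i) / blaschkeProd 1 B (lam i)) *
        starRingEnd ℂ (G k (lam j) / blaschkeProd 1 B (lam j)) =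
        (∑ k, G k (lam i) * starRingEnd ℂ (G k (lam j))) /
          (blaschkeProd 1 B (lam i) * starRingEnd ℂ (blaschkeProd 1 B (lam j))) := by
      intro l G
      rw [Finset.sum_div]
      refine Finset.sum_congr rfl fun k _ => ?_
      rw [map_div₀, div_mul_div_comm]
    rw [pull, pull, ← sub_div, hM, div_eq_div_iff hd (mul_ne_zero gi gj')]
    rw [map_mul] at e1
    linear_combination e1 - e2
  have hquad := tk_quad M _ _ hdec
  have hp := tk_inertia M hherm
    (Matrix.of fun k j => starRingEnd ℂ (E k (lam j) / blaschkeProd 1 B (lam j))) 1 (by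
      intro x hx
      have hx' : ∀ k, ∑ j, starRingEnd ℂ (E k (lam j) / blaschkeProd 1 B (lam j)) * x j = 0 :=
        fun k => congrFun hx k
      rw [hquad]
      simp only [hx']
      simp only [norm_zero, ne_eq, OfNat.ofNat_ne_zero, not_false_eq_true, zero_pow, Finset.sum_const_zero,
        zero_sub, one_mul, Left.neg_nonpos_iff]
      positivity)
  have hn := tk_inertia M hherm
    (Matrix.of fun k j => starRingEnd ℂ (F k (lam j) / blaschkeProd 1 B (lam j))) (-1) (by
      intro x hx
      have hx' : ∀ k, ∑ j, starRingEnd ℂ (F k (lam j) / blaschkeProd 1 B (lam j)) * x j = 0 :=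
        fun k => congrFun hx k
      rw [hquad]
      simp only [hx']
      simp only [norm_zero, ne_eq, OfNat.ofNat_ne_zero, not_false_eq_true, zero_pow, Finset.sum_const_zero,
        sub_zero, neg_mul, one_mul, Left.neg_nonpos_iff]
      positivity)
  simp only [one_mul, neg_mul, Left.neg_pos_iff] at hp hn
  have hne : ∀ i, hherm.eigenvalues i ≠ 0 := by
    intro i hi
    have h1 := hherm.det_eq_prod_eigenvalues
    rw [Finset.prod_eq_zero (Finset.mem_univ i) (by rw [hi]; simp)] at h1
    exact hdet.ne_zero h1
  have hsum : (Finset.univ.filter fun i => 0 < hherm.eigenvalues i).card +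
      (Finset.univ.filter fun i => hherm.eigenvalues i < 0).card = N := by
    have h1 := Finset.card_filter_add_card_filter_not (s := (Finset.univ : Finset (Fin N)))
      (fun i => 0 < hherm.eigenvalues i)
    have h2 : (Finset.univ.filter fun i => ¬ 0 < hherm.eigenvalues i) =
        (Finset.univ.filter fun i => hherm.eigenvalues i < 0) := by
      refine Finset.filter_congr fun i _ => ?_
      rw [not_lt]
      exact ⟨fun h => lt_of_le_of_ne h (hne i), le_of_lt⟩
    rw [h2] at h1
    simpa using h1
  exact ⟨m, n, c, A, B, by omega, by omega, hc, hA, hB, h⟩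

/-- **Takagi's theorem.** If the Pick matrix of the data `(λᵢ, wᵢ)` is Hermitian and
invertible, with `π` positive and `ν` negative eigenvalues, then there are Blaschke
products `f` of degree `π` and `g` of degree `ν` with `g(λᵢ) ≠ 0` and `f(λᵢ)/g(λᵢ) = wᵢ`
for all `i`; the quotient `f/g` is unimodular on the unit circle wherever defined. -/
theorem takagi_theorem {N : ℕ} (lam : Fin N → ℂ) (w : Fin N → ℂ)
    (hlam : ∀ i, lam i ∈ ball (0 : ℂ) 1) (hdist : Function.Injective lam)
    (piN nu : ℕ)
    (hherm : (Matrix.of fun i j : Fin N =>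
      (1 - w i * starRingEnd ℂ (w j)) / (1 - lam i * starRingEnd ℂ (lam j))).IsHermitian)
    (hinv : IsUnit ((Matrix.of fun i j : Fin N =>
      (1 - w i * starRingEnd ℂ (w j)) / (1 - lam i * starRingEnd ℂ (lam j))).det))
    (hpos : (Finset.univ.filter fun i => 0 < hherm.eigenvalues i).card = piN)
    (hneg : (Finset.univ.filter fun i => hherm.eigenvalues i < 0).card = nu) :
    ∃ (c₁ : ℂ) (a : Fin piN → ℂ) (c₂ : ℂ) (b : Fin nu → ℂ),
      ‖c₁‖ = 1 ∧ (∀ k, a k ∈ ball (0 : ℂ) 1) ∧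
      ‖c₂‖ = 1 ∧ (∀ k, b k ∈ ball (0 : ℂ) 1) ∧
      (∀ i, blaschkeProd c₂ b (lam i) ≠ 0 ∧
        blaschkeProd c₁ a (lam i) / blaschkeProd c₂ b (lam i) = w i) ∧
      (∀ z : ℂ, ‖z‖ = 1 → blaschkeProd c₂ b z ≠ 0 →
        ‖blaschkeProd c₁ a z / blaschkeProd c₂ b z‖ = 1) := by
  obtain ⟨m, n, c, A, B, hm, hn, hc, hA, hB, h⟩ := tk_main lam w _
    (fun i => by simpa using hlam i) hdist (fun i j => rfl) hinv hherm
  replace hm := hpos.symm.trans hm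
  replace hn := hneg.symm.trans hn
  subst hm hn
  refine ⟨c, A, 1, B, hc, fun k => by simpa using hA k, by simp, fun k => by simpa using hB k, ?_, ?_⟩
  · intro i
    refine ⟨(h i).1, ?_⟩
    rw [(h i).2, mul_div_cancel_right₀ _ (h i).1]
  · intro z hz _
    rw [norm_div, tk_bp_circle c hc A hA z hz, tk_bp_circle 1 (by simp) B hB z hz, div_one]
end
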